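/- arXiv:2603.26061 — 3 statements merged into one kernel-verified Lean document; each statement's English description precedes it below -/
import Mathlib

section
/- Let φ be a uniformly convex N-function such that t ↦ φ'(t)/t is non-decreasing on (0,∞). Let B: ℝᴺ → ℝᴹ be linear, V₀ ⊆ ℝᴺ with ker(B) ∩ V₀ = {0}, g, f ∈ ℝᴺ, w ∈ (0,∞)ᴹ. Let u_g minimize J over g + V₀, σ minimize J* over Σ_f, and let σⁿ ∈ Σ_f, σⁿ⁺¹ ∈ Σ_f, uⁿ⁺¹ ∈ V₀ satisfy the dual IRLS saddle-point system. Set zⁿ_α := A_{φ*}(w_α⁻¹ σⁿ_α) and u_g^{n+1} := uⁿ⁺¹ + g. Then there exists a constant C < ∞ depending only on the uniform convexity constants of φ such that Σ_α w_α |V_φ((B u_g)_α) − V_φ(zⁿ_α)|² + Σ_α w_α (φ'(|zⁿ_α|)/|zⁿ_α|)·|zⁿ_α − (B u_g^{n+1})_α|² ≤ C·(J*(σⁿ) − J*(σ)). -/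
open Filter MeasureTheory Set Topology

noncomputable section

/-- `φ : [0,∞) → [0,∞)` is an N-function with right-continuous non-decreasing
derivative `φ'`. -/
structure IsNFunction (φ φ' : ℝ → ℝ) : Prop where
  continuousOn : ContinuousOn φ (Set.Ici 0)
  convexOn : ConvexOn ℝ (Set.Ici 0) φ
  deriv_nonneg : ∀ t : ℝ, 0 ≤ t → 0 ≤ φ' t
  deriv_monotoneOn : MonotoneOn φ' (Set.Ici 0)
  deriv_rightContinuous : ∀ t : ℝ, 0 ≤ t →
    Filter.Tendsto φ' (nhdsWithin t (Set.Ioi t)) (nhds (φ' t))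
  deriv_zero : φ' 0 = 0
  deriv_pos : ∀ t : ℝ, 0 < t → 0 < φ' t
  deriv_tendsto_atTop : Filter.Tendsto φ' Filter.atTop Filter.atTop
  eq_integral : ∀ t : ℝ, 0 ≤ t → φ t = ∫ s in (0:ℝ)..t, φ' s

/-- Fenchel conjugate `φ*(r) = sup_{s ≥ 0} (r s − φ(s))`. -/
def fenchelConj (φ : ℝ → ℝ) (r : ℝ) : ℝ :=
  sSup {x : ℝ | ∃ s : ℝ, 0 ≤ s ∧ x = r * s - φ s}

/-- Right-continuous inverse `(φ')⁻¹(t) = sup {r ≥ 0 : φ'(r) ≤ t}`. -/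
def rcInv (φ' : ℝ → ℝ) (t : ℝ) : ℝ :=
  sSup {r : ℝ | 0 ≤ r ∧ φ' r ≤ t}

/-- `A_ψ(t) = (ψ(|t|)/|t|)·t` for `t ≠ 0` and `A_ψ(0) = 0`. -/
def Aphi (ψ : ℝ → ℝ) (t : ℝ) : ℝ := if t = 0 then 0 else ψ (|t|) / |t| * t

/-- `V_ψ(t) = sqrt(ψ(|t|)/|t|)·t` for `t ≠ 0` and `V_ψ(0) = 0`. -/
def Vphi (ψ : ℝ → ℝ) (t : ℝ) : ℝ := if t = 0 then 0 else Real.sqrt (ψ (|t|) / |t|) * t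

/-- Primal energy `J(v) = Σ_α w_α φ(|(Bv)_α|) − f·v`. -/
def primalJ {N M : ℕ} (w : Fin M → ℝ) (φ : ℝ → ℝ)
    (B : (Fin N → ℝ) →ₗ[ℝ] (Fin M → ℝ)) (f v : Fin N → ℝ) : ℝ :=
  (∑ α, w α * φ (|B v α|)) - ∑ i, f i * v i

/-- Dual energy `J*(τ) = Σ_α w_α ψ(w_α⁻¹|τ_α|) − τᵀ(Bg)` with dual integrand `ψ`. -/
def dualJ {N M : ℕ} (w : Fin M → ℝ) (ψ : ℝ → ℝ)
    (B : (Fin N → ℝ) →ₗ[ℝ] (Fin M → ℝ)) (g : Fin N → ℝ) (τ : Fin M → ℝ) : ℝ :=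
  (∑ α, w α * ψ ((w α)⁻¹ * |τ α|)) - ∑ α, τ α * B g α

/-- Dual constraint set `Σ_f = {τ : τᵀ(Bv) = f·v for all v ∈ V₀}`. -/
def SigmaF {N M : ℕ} (B : (Fin N → ℝ) →ₗ[ℝ] (Fin M → ℝ))
    (V₀ : Submodule ℝ (Fin N → ℝ)) (f : Fin N → ℝ) : Set (Fin M → ℝ) :=
  {τ | ∀ v ∈ V₀, (∑ α, τ α * B v α) = ∑ i, f i * v i}

/-- Quotient `(φ*)'(w_α⁻¹|t|)/|t|`, interpreted at `t = 0` as the prescribed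
right limit `L_α`. -/
def quotW (φ' : ℝ → ℝ) (wα Lα t : ℝ) : ℝ :=
  if t = 0 then Lα else rcInv φ' (wα⁻¹ * |t|) / |t|

/-!
Write `A = Aphi φ'` and `κ(t) = φ'(|t|)/|t|`, so that `A(t) = κ(t) t` and `V_φ(t) = √κ(t) t`.
Uniform convexity and the monotonicity of `κ` make `A` strongly monotone and Lipschitz continuous
between `y` and `z` with respect to the weight `max (κ y) (κ z)`. Hence the quadratic distance with
this weight dominates `|V_φ(y) - V_φ(z)|²` and is dominated by the Bregman distance of `φ ∘ |·|`.
By the Euler–Lagrange equation for `u`, the flux `w A(B(u + g))` lies in `Σ_f`, and its distance in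
dual energy from `σⁿ = w A(zⁿ)` is exactly the sum of the Bregman distances from `zⁿ` to
`B(u + g)`. Finally, the saddle-point system says that `B(uⁿ⁺¹ + g)` is the best approximation of
`zⁿ` from `B(V₀ + g)` in a norm whose weights are at most `w max (κ y) (κ z)` for `y = B(u + g)`
and `z = zⁿ`, wherever these two differ.
-/

/-- The IRLS weight `ψ(|t|)/|t|`, through which `Aphi ψ` and `Vphi ψ` are multiplications.
Division by zero gives it the value `0` at `t = 0`. -/
def irlsWeight (ψ : ℝ → ℝ) (t : ℝ) : ℝ := ψ |t| / |t|

/-- Uniform convexity, with constants `c` and `C`, of an N-function with derivative `ψ`. -/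
def UniformlyConvexWith (c C : ℝ) (ψ : ℝ → ℝ) : Prop :=
  ∀ t s : ℝ, 0 ≤ t → t < s →
    c * (ψ s / s) ≤ (ψ t - ψ s) / (t - s) ∧ (ψ t - ψ s) / (t - s) ≤ C * (ψ s / s)

/-- The Bregman distance of `φ ∘ |·|` from the base point `z` to `y`, where `Aphi φ'` plays the
role of the derivative. -/
def bregman (φ φ' : ℝ → ℝ) (y z : ℝ) : ℝ := φ |y| - φ |z| - Aphi φ' z * (y - z)

/-- The weighted quadratic distance to which the natural distance, the dual energy gap and the
IRLS error are all compared. -/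
def quadDist {ι : Type*} [Fintype ι] (w : ι → ℝ) (ψ : ℝ → ℝ) (y z : ι → ℝ) : ℝ :=
  ∑ α, w α * (max (irlsWeight ψ (y α)) (irlsWeight ψ (z α)) * (y α - z α) ^ 2)

/-- The dual variable `w A_ψ(z)` belonging to the primal variable `z`. -/
def flux {ι : Type*} (w : ι → ℝ) (ψ : ℝ → ℝ) (z : ι → ℝ) : ι → ℝ :=
  fun α => w α * Aphi ψ (z α)

theorem forall_of_symm_of_neg {P : ℝ → ℝ → Prop} (symm : ∀ y z, P y z → P z y)
    (neg : ∀ y z, P (-y) (-z) → P y z) (of_abs_le : ∀ y z, 0 ≤ y → |z| ≤ y → P y z)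
    (y z : ℝ) : P y z := by
  wlog hzy : |z| ≤ |y| generalizing y z
  · exact symm z y (this z y (le_of_not_ge hzy))
  rcases le_total 0 y with hy | hy
  · exact of_abs_le y z hy (by rwa [abs_of_nonneg hy] at hzy)
  · exact neg y z (of_abs_le _ _ (neg_nonneg.2 hy) (by rwa [abs_neg, ← abs_of_nonpos hy]))

theorem mul_sub_le_integral_of_monotone {f : ℝ → ℝ} (hf : Monotone f) (a b : ℝ) :
    f a * (b - a) ≤ ∫ x in a..b, f x := by
  rcases le_total a b with hab | hba
  · have := intervalIntegral.integral_mono_on hab intervalIntegrable_const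
      (hf.intervalIntegrable (μ := volume)) fun x hx => hf hx.1
    rwa [intervalIntegral.integral_const, smul_eq_mul, mul_comm] at this
  · have := intervalIntegral.integral_mono_on hba (hf.intervalIntegrable (μ := volume))
      intervalIntegrable_const fun x hx => hf hx.2
    rw [intervalIntegral.integral_const, smul_eq_mul] at this
    rw [intervalIntegral.integral_symm]
    linarith

theorem rcInv_apply_of_strictMonoOn {ψ : ℝ → ℝ} (hψ : StrictMonoOn ψ (Ici 0)) {s : ℝ}
    (hs : 0 ≤ s) : rcInv ψ (ψ s) = s :=
  IsGreatest.csSup_eq ⟨⟨hs, le_rfl⟩, fun _ hr => (hψ.le_iff_le hr.1 hs).1 hr.2⟩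

theorem fenchelConj_eq_of_tangent_le {φ : ℝ → ℝ} {r s : ℝ} (hs : 0 ≤ s)
    (h : ∀ t, 0 ≤ t → φ s + r * (t - s) ≤ φ t) : fenchelConj φ r = r * s - φ s := by
  refine IsGreatest.csSup_eq ⟨⟨s, hs, rfl⟩, ?_⟩
  rintro _ ⟨t, ht, rfl⟩
  linarith [h t ht]

section Weight

variable (ψ : ℝ → ℝ) (t : ℝ)

theorem irlsWeight_zero : irlsWeight ψ 0 = 0 := by simp [irlsWeight]

theorem irlsWeight_neg : irlsWeight ψ (-t) = irlsWeight ψ t := by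
  rw [irlsWeight, abs_neg, irlsWeight]

theorem aphi_eq_irlsWeight_mul : Aphi ψ t = irlsWeight ψ t * t := by
  rw [Aphi, irlsWeight]
  split_ifs with ht
  · rw [ht, mul_zero]
  · rfl

theorem vphi_eq_sqrt_irlsWeight_mul : Vphi ψ t = √(irlsWeight ψ t) * t := by
  rw [Vphi, irlsWeight]
  split_ifs with ht
  · rw [ht, mul_zero]
  · rfl

theorem aphi_zero : Aphi ψ 0 = 0 := if_pos rfl

theorem aphi_neg : Aphi ψ (-t) = -Aphi ψ t := by
  rw [aphi_eq_irlsWeight_mul, aphi_eq_irlsWeight_mul, irlsWeight_neg, mul_neg]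

end Weight

namespace UniformlyConvexWith

variable {c C : ℝ} {ψ : ℝ → ℝ}

theorem mul_sub_le (h : UniformlyConvexWith c C ψ) {t s : ℝ} (ht : 0 ≤ t) (hts : t ≤ s) :
    c * (ψ s / s) * (s - t) ≤ ψ s - ψ t := by
  rcases hts.eq_or_lt with rfl | hlt
  · simp only [sub_self, mul_zero, le_refl]
  · have := (h t s ht hlt).1
    rwa [← neg_sub s t, ← neg_sub (ψ s), neg_div_neg_eq, le_div_iff₀ (sub_pos.2 hlt)] at this

theorem sub_le_mul (h : UniformlyConvexWith c C ψ) {t s : ℝ} (ht : 0 ≤ t) (hts : t ≤ s) :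
    ψ s - ψ t ≤ C * (ψ s / s) * (s - t) := by
  rcases hts.eq_or_lt with rfl | hlt
  · simp only [sub_self, mul_zero, le_refl]
  · have := (h t s ht hlt).2
    rwa [← neg_sub s t, ← neg_sub (ψ s), neg_div_neg_eq, div_le_iff₀ (sub_pos.2 hlt)] at this

end UniformlyConvexWith

namespace IsNFunction

variable {φ φ' : ℝ → ℝ} {c C : ℝ}

theorem irlsWeight_pos (h : IsNFunction φ φ') {t : ℝ} (ht : t ≠ 0) : 0 < irlsWeight φ' t :=
  div_pos (h.deriv_pos _ (abs_pos.2 ht)) (abs_pos.2 ht)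

theorem irlsWeight_nonneg (h : IsNFunction φ φ') (t : ℝ) : 0 ≤ irlsWeight φ' t :=
  div_nonneg (h.deriv_nonneg _ (abs_nonneg t)) (abs_nonneg t)

theorem irlsWeight_le_irlsWeight (h : IsNFunction φ φ')
    (hκ : MonotoneOn (fun t => φ' t / t) (Ioi 0)) {s t : ℝ} (hst : |s| ≤ |t|) :
    irlsWeight φ' s ≤ irlsWeight φ' t := by
  rcases eq_or_ne s 0 with rfl | hs
  · exact (irlsWeight_zero φ').trans_le (h.irlsWeight_nonneg t)
  · exact hκ (abs_pos.2 hs) ((abs_pos.2 hs).trans_le hst) hst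

theorem irlsWeight_le_max_of_mem_uIcc (h : IsNFunction φ φ')
    (hκ : MonotoneOn (fun t => φ' t / t) (Ioi 0)) {y z s : ℝ} (hs : s ∈ uIcc y z) :
    irlsWeight φ' s ≤ max (irlsWeight φ' y) (irlsWeight φ' z) := by
  have hsmax : |s| ≤ max |y| |z| := by
    rcases mem_uIcc.1 hs with hs | hs
    · exact abs_le_max_abs_abs hs.1 hs.2
    · exact (abs_le_max_abs_abs hs.1 hs.2).trans_eq (max_comm _ _)
  rcases le_max_iff.1 hsmax with hsy | hsz
  · exact le_max_of_le_left (h.irlsWeight_le_irlsWeight hκ hsy)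
  · exact le_max_of_le_right (h.irlsWeight_le_irlsWeight hκ hsz)

theorem aphi_of_nonneg (h : IsNFunction φ φ') {t : ℝ} (ht : 0 ≤ t) : Aphi φ' t = φ' t := by
  rcases ht.eq_or_lt with rfl | ht
  · rw [aphi_zero, h.deriv_zero]
  · rw [Aphi, if_neg ht.ne', abs_of_pos ht, div_mul_cancel₀ _ ht.ne']

theorem abs_aphi (h : IsNFunction φ φ') (t : ℝ) : |Aphi φ' t| = φ' |t| := by
  rw [← h.aphi_of_nonneg (abs_nonneg t), aphi_eq_irlsWeight_mul, aphi_eq_irlsWeight_mul, abs_mul,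
    abs_of_nonneg (h.irlsWeight_nonneg t), irlsWeight, irlsWeight, abs_abs]

theorem monotone_aphi (h : IsNFunction φ φ') : Monotone (Aphi φ') :=
  monotone_of_odd_of_monotoneOn_nonneg (aphi_neg φ')
    (h.deriv_monotoneOn.congr fun _ ht => (h.aphi_of_nonneg ht).symm)

theorem comp_abs_eq_integral_aphi (h : IsNFunction φ φ') (t : ℝ) :
    φ |t| = ∫ s in 0..t, Aphi φ' s := by
  have of_nonneg {r : ℝ} (hr : 0 ≤ r) : φ r = ∫ s in 0..r, Aphi φ' s := by
    rw [h.eq_integral r hr]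
    refine intervalIntegral.integral_congr fun s hs => (h.aphi_of_nonneg ?_).symm
    rw [uIcc_of_le hr] at hs
    exact hs.1
  rcases le_total 0 t with ht | ht
  · rw [abs_of_nonneg ht, of_nonneg ht]
  · calc φ |t| = -∫ s in 0..-t, Aphi φ' (-s) := by
          rw [abs_of_nonpos ht, of_nonneg (neg_nonneg.2 ht)]
          simp only [aphi_neg, intervalIntegral.integral_neg, neg_neg]
      _ = ∫ s in 0..t, Aphi φ' s := by
          rw [intervalIntegral.integral_comp_neg, neg_neg, neg_zero,
            ← intervalIntegral.integral_symm]

theorem tangent_le (h : IsNFunction φ φ') (a b : ℝ) : φ |a| + Aphi φ' a * (b - a) ≤ φ |b| := by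
  have hint (t : ℝ) : IntervalIntegrable (Aphi φ') volume 0 t := h.monotone_aphi.intervalIntegrable
  have := mul_sub_le_integral_of_monotone h.monotone_aphi a b
  rw [← intervalIntegral.integral_interval_sub_left (hint b) (hint a),
    ← h.comp_abs_eq_integral_aphi, ← h.comp_abs_eq_integral_aphi] at this
  linarith

theorem fenchelConj_abs_aphi (h : IsNFunction φ φ') (t : ℝ) :
    fenchelConj φ |Aphi φ' t| = Aphi φ' t * t - φ |t| := by
  have hmul : φ' |t| * |t| = Aphi φ' t * t := by
    rw [← h.abs_aphi, ← abs_mul, aphi_eq_irlsWeight_mul, mul_assoc,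
      abs_of_nonneg (mul_nonneg (h.irlsWeight_nonneg t) (mul_self_nonneg t))]
  rw [h.abs_aphi, fenchelConj_eq_of_tangent_le (abs_nonneg t), hmul]
  intro s hs
  simpa only [h.aphi_of_nonneg (abs_nonneg t), abs_abs, abs_of_nonneg hs]
    using h.tangent_le |t| s

theorem aphi_sub_mul_le_bregman (h : IsNFunction φ φ') (y z s : ℝ) :
    (Aphi φ' s - Aphi φ' z) * (y - s) ≤ bregman φ φ' y z := by
  rw [bregman]
  linarith [h.tangent_le s y, h.tangent_le z s]

theorem uniformConvexity_le_one (h : IsNFunction φ φ') (huc : UniformlyConvexWith c C φ') :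
    c ≤ 1 := by
  have := huc.mul_sub_le le_rfl zero_le_one
  rw [h.deriv_zero] at this
  nlinarith [h.deriv_pos 1 one_pos]

theorem one_le_uniformConvexity (h : IsNFunction φ φ') (huc : UniformlyConvexWith c C φ') :
    1 ≤ C := by
  have := huc.sub_le_mul le_rfl zero_le_one
  rw [h.deriv_zero] at this
  nlinarith [h.deriv_pos 1 one_pos]

theorem mul_sub_le_aphi_sub (h : IsNFunction φ φ') (hc : 0 < c)
    (huc : UniformlyConvexWith c C φ') {y z : ℝ} (hy : 0 ≤ y) (hzy : |z| ≤ y) :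
    c / 2 * irlsWeight φ' y * (y - z) ≤ Aphi φ' y - Aphi φ' z := by
  have hzy' := abs_le.1 hzy
  have hκy := h.irlsWeight_nonneg y
  rcases le_total 0 z with hz | hz
  · rw [h.aphi_of_nonneg hy, h.aphi_of_nonneg hz]
    refine le_trans ?_ (huc.mul_sub_le hz hzy'.2)
    rw [irlsWeight, abs_of_nonneg hy] at hκy ⊢
    have := sub_nonneg.2 hzy'.2
    gcongr
    linarith
  · have hκz := mul_nonneg (h.irlsWeight_nonneg z) (neg_nonneg.2 hz)
    rw [aphi_eq_irlsWeight_mul, aphi_eq_irlsWeight_mul]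
    calc c / 2 * irlsWeight φ' y * (y - z) ≤ 1 / 2 * irlsWeight φ' y * (2 * y) := by
          have := h.uniformConvexity_le_one huc
          gcongr <;> linarith
      _ ≤ irlsWeight φ' y * y - irlsWeight φ' z * z := by linarith

theorem aphi_sub_le_mul_sub (h : IsNFunction φ φ') (huc : UniformlyConvexWith c C φ')
    (hκ : MonotoneOn (fun t => φ' t / t) (Ioi 0)) {y z : ℝ} (hy : 0 ≤ y) (hzy : |z| ≤ y) :
    Aphi φ' y - Aphi φ' z ≤ C * irlsWeight φ' y * (y - z) := by
  have hzy' := abs_le.1 hzy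
  have hκy := h.irlsWeight_nonneg y
  rcases le_total 0 z with hz | hz
  · rw [h.aphi_of_nonneg hy, h.aphi_of_nonneg hz, irlsWeight, abs_of_nonneg hy]
    exact huc.sub_le_mul hz hzy'.2
  · have hκzy := h.irlsWeight_le_irlsWeight hκ (hzy.trans (le_abs_self y))
    rw [aphi_eq_irlsWeight_mul, aphi_eq_irlsWeight_mul]
    calc irlsWeight φ' y * y - irlsWeight φ' z * z ≤ 1 * irlsWeight φ' y * (y - z) := by
          linarith [mul_le_mul_of_nonneg_right hκzy (neg_nonneg.2 hz)]
      _ ≤ C * irlsWeight φ' y * (y - z) := by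
          have := h.one_le_uniformConvexity huc
          have := sub_nonneg.2 hzy'.2
          gcongr

theorem mul_sq_le_aphi_sub_mul (h : IsNFunction φ φ') (hc : 0 < c)
    (huc : UniformlyConvexWith c C φ') (hκ : MonotoneOn (fun t => φ' t / t) (Ioi 0)) (y z : ℝ) :
    c / 2 * max (irlsWeight φ' y) (irlsWeight φ' z) * (y - z) ^ 2
      ≤ (Aphi φ' y - Aphi φ' z) * (y - z) := by
  induction y, z using forall_of_symm_of_neg with
  | symm y z hyz =>
    rw [max_comm]
    linarith
  | neg y z hyz =>
    simp only [irlsWeight_neg, aphi_neg] at hyz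
    linarith
  | of_abs_le y z hy hzy =>
    have := mul_le_mul_of_nonneg_right (h.mul_sub_le_aphi_sub hc huc hy hzy)
      (sub_nonneg.2 ((le_abs_self z).trans hzy))
    rw [max_eq_left (h.irlsWeight_le_irlsWeight hκ (hzy.trans (le_abs_self y)))]
    linarith

theorem abs_aphi_sub_le (h : IsNFunction φ φ') (huc : UniformlyConvexWith c C φ')
    (hκ : MonotoneOn (fun t => φ' t / t) (Ioi 0)) (y z : ℝ) :
    |Aphi φ' y - Aphi φ' z| ≤ C * max (irlsWeight φ' y) (irlsWeight φ' z) * |y - z| := by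
  induction y, z using forall_of_symm_of_neg with
  | symm y z hyz => rwa [abs_sub_comm, max_comm, abs_sub_comm z]
  | neg y z hyz =>
    rwa [irlsWeight_neg, irlsWeight_neg, aphi_neg, aphi_neg, neg_sub_neg, neg_sub_neg,
      abs_sub_comm, abs_sub_comm z] at hyz
  | of_abs_le y z hy hzy =>
    have hzy' : z ≤ y := (le_abs_self z).trans hzy
    rw [max_eq_left (h.irlsWeight_le_irlsWeight hκ (hzy.trans (le_abs_self y))),
      abs_of_nonneg (sub_nonneg.2 hzy'), abs_of_nonneg (sub_nonneg.2 (h.monotone_aphi hzy'))]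
    exact h.aphi_sub_le_mul_sub huc hκ hy hzy

theorem abs_aphi_sub_le_of_mem_uIcc (h : IsNFunction φ φ') (huc : UniformlyConvexWith c C φ')
    (hκ : MonotoneOn (fun t => φ' t / t) (Ioi 0)) {y z s : ℝ} (hs : s ∈ uIcc y z) :
    |Aphi φ' y - Aphi φ' s| ≤ C * max (irlsWeight φ' y) (irlsWeight φ' z) * |y - s| := by
  have hC := h.one_le_uniformConvexity huc
  refine (h.abs_aphi_sub_le huc hκ y s).trans ?_
  gcongr C * ?_ * _
  exact max_le (le_max_left _ _) (h.irlsWeight_le_max_of_mem_uIcc hκ hs)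

/- Between `z` and `y` lies a point `s` so close to `y` that `Aphi φ'` makes at least half of its
increment between `z` and `s`. -/
theorem mul_sq_le_bregman (h : IsNFunction φ φ') (hc : 0 < c)
    (huc : UniformlyConvexWith c C φ') (hκ : MonotoneOn (fun t => φ' t / t) (Ioi 0)) (y z : ℝ) :
    c ^ 2 / (16 * C) * (max (irlsWeight φ' y) (irlsWeight φ' z) * (y - z) ^ 2)
      ≤ bregman φ φ' y z := by
  have hC := h.one_le_uniformConvexity huc
  have hc1 := h.uniformConvexity_le_one huc
  set K := max (irlsWeight φ' y) (irlsWeight φ' z)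
  set θ := c / (4 * C) with hθ
  have hCθ : C * θ = c / 4 := by rw [hθ]; field_simp
  have hθ0 : 0 ≤ θ := by positivity
  have hθ1 : θ ≤ 1 := by nlinarith
  obtain ⟨s, hs⟩ : ∃ s, y - s = θ * (y - z) := ⟨y - θ * (y - z), sub_sub_cancel _ _⟩
  have hsmem : s ∈ uIcc y z := segment_eq_uIcc y z ▸
    ⟨1 - θ, θ, sub_nonneg.2 hθ1, hθ0, sub_add_cancel _ _, by simp only [smul_eq_mul]; linarith⟩
  have htotal : c / 2 * K * (y - z) ^ 2 ≤ (Aphi φ' y - Aphi φ' z) * (y - z) :=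
    h.mul_sq_le_aphi_sub_mul hc huc hκ y z
  have hrest : (Aphi φ' y - Aphi φ' s) * (y - z) ≤ c / 4 * K * (y - z) ^ 2 :=
    calc (Aphi φ' y - Aphi φ' s) * (y - z) ≤ |Aphi φ' y - Aphi φ' s| * |y - z| := by
          rw [← abs_mul]; exact le_abs_self _
      _ ≤ C * K * |y - s| * |y - z| := by
          gcongr; exact h.abs_aphi_sub_le_of_mem_uIcc huc hκ hsmem
      _ = c / 4 * K * (y - z) ^ 2 := by
          rw [hs, abs_mul, abs_of_nonneg hθ0, ← hCθ, ← sq_abs (y - z)]; ring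
  calc c ^ 2 / (16 * C) * (K * (y - z) ^ 2) = θ * (c / 4 * K * (y - z) ^ 2) := by
        rw [hθ]; field_simp; ring
    _ ≤ θ * ((Aphi φ' s - Aphi φ' z) * (y - z)) :=
        mul_le_mul_of_nonneg_left (by linarith) hθ0
    _ = (Aphi φ' s - Aphi φ' z) * (y - s) := by rw [hs]; ring
    _ ≤ bregman φ φ' y z := h.aphi_sub_mul_le_bregman y z s

theorem sqrt_irlsWeight_add_mul_vphi_sub (h : IsNFunction φ φ') (y z : ℝ) :
    (√(irlsWeight φ' y) + √(irlsWeight φ' z)) * (Vphi φ' y - Vphi φ' z)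
      = Aphi φ' y - Aphi φ' z + √(irlsWeight φ' y) * √(irlsWeight φ' z) * (y - z) := by
  have hy := Real.mul_self_sqrt (h.irlsWeight_nonneg y)
  have hz := Real.mul_self_sqrt (h.irlsWeight_nonneg z)
  rw [vphi_eq_sqrt_irlsWeight_mul, vphi_eq_sqrt_irlsWeight_mul, aphi_eq_irlsWeight_mul,
    aphi_eq_irlsWeight_mul]
  linear_combination y * hy - z * hz

theorem sqrt_mul_abs_vphi_sub_le (h : IsNFunction φ φ') (huc : UniformlyConvexWith c C φ')
    (hκ : MonotoneOn (fun t => φ' t / t) (Ioi 0)) (y z : ℝ) :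
    √(max (irlsWeight φ' y) (irlsWeight φ' z)) * |Vphi φ' y - Vphi φ' z|
      ≤ (1 + C) * max (irlsWeight φ' y) (irlsWeight φ' z) * |y - z| := by
  have hmono : Monotone Real.sqrt := fun _ _ => Real.sqrt_le_sqrt
  set p := irlsWeight φ' y
  set q := irlsWeight φ' z
  have hK0 : 0 ≤ max p q := le_max_of_le_left (h.irlsWeight_nonneg y)
  calc √(max p q) * |Vphi φ' y - Vphi φ' z| ≤ (√p + √q) * |Vphi φ' y - Vphi φ' z| := by
        gcongr
        rw [hmono.map_max]
        exact max_le_add_of_nonneg (Real.sqrt_nonneg _) (Real.sqrt_nonneg _)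
    _ = |Aphi φ' y - Aphi φ' z + √p * √q * (y - z)| := by
        rw [← h.sqrt_irlsWeight_add_mul_vphi_sub, abs_mul, abs_of_nonneg (a := _ + _)]
        positivity
    _ ≤ C * max p q * |y - z| + √(max p q) * √(max p q) * |y - z| := by
        refine (abs_add_le _ _).trans (add_le_add (h.abs_aphi_sub_le huc hκ y z) ?_)
        rw [abs_mul, abs_of_nonneg (by positivity)]
        gcongr
        exacts [le_max_left _ _, le_max_right _ _]
    _ = (1 + C) * max p q * |y - z| := by
        rw [Real.mul_self_sqrt hK0]; ring

theorem sq_vphi_sub_le (h : IsNFunction φ φ') (huc : UniformlyConvexWith c C φ')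
    (hκ : MonotoneOn (fun t => φ' t / t) (Ioi 0)) (y z : ℝ) :
    (Vphi φ' y - Vphi φ' z) ^ 2
      ≤ (1 + C) ^ 2 * (max (irlsWeight φ' y) (irlsWeight φ' z) * (y - z) ^ 2) := by
  rcases eq_or_ne y z with rfl | hyz
  · simp only [sub_self, ne_eq, OfNat.ofNat_ne_zero, not_false_eq_true, zero_pow, mul_zero, le_refl]
  have hK : 0 < max (irlsWeight φ' y) (irlsWeight φ' z) := by
    rcases eq_or_ne y 0 with rfl | hy
    · exact lt_max_of_lt_right (h.irlsWeight_pos hyz.symm)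
    · exact lt_max_of_lt_left (h.irlsWeight_pos hy)
  have hsq := pow_le_pow_left₀ (by positivity) (h.sqrt_mul_abs_vphi_sub_le huc hκ y z) 2
  rw [mul_pow, Real.sq_sqrt hK.le, sq_abs, mul_pow, sq_abs] at hsq
  exact le_of_mul_le_mul_left (by linarith) hK

theorem continuous_aphi (h : IsNFunction φ φ') (huc : UniformlyConvexWith c C φ')
    (hκ : MonotoneOn (fun t => φ' t / t) (Ioi 0)) : Continuous (Aphi φ') := by
  have hC := h.one_le_uniformConvexity huc
  refine continuous_iff_continuousAt.2 fun x =>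
    continuousAt_of_locally_lipschitz one_pos (C * irlsWeight φ' (|x| + 1)) fun y hy => ?_
  have hκ_le {t : ℝ} (ht : |t| ≤ |x| + 1) : irlsWeight φ' t ≤ irlsWeight φ' (|x| + 1) :=
    h.irlsWeight_le_irlsWeight hκ (ht.trans (le_abs_self _))
  have hyx : |y| ≤ |x| + 1 := by
    linarith [abs_sub_abs_le_abs_sub y x, (Real.dist_eq y x).symm.trans_lt hy]
  rw [Real.dist_eq, Real.dist_eq]
  refine (h.abs_aphi_sub_le huc hκ y x).trans ?_
  gcongr
  exact max_le (hκ_le hyx) (hκ_le (lt_add_one |x|).le)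

theorem surjective_aphi (h : IsNFunction φ φ') (hcont : Continuous (Aphi φ')) :
    Function.Surjective (Aphi φ') := by
  have htop : Tendsto (Aphi φ') atTop atTop := h.deriv_tendsto_atTop.congr' <| by
    filter_upwards [eventually_ge_atTop 0] with t ht using (h.aphi_of_nonneg ht).symm
  refine hcont.surjective htop ?_
  refine (tendsto_neg_atTop_atBot.comp (htop.comp tendsto_neg_atBot_atTop)).congr fun t => ?_
  simp only [Function.comp_apply, aphi_neg, neg_neg]

theorem hasDerivAt_comp_abs (h : IsNFunction φ φ') (hcont : Continuous (Aphi φ')) (t : ℝ) :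
    HasDerivAt (fun s => φ |s|) (Aphi φ' t) t := by
  simp only [h.comp_abs_eq_integral_aphi]
  exact (hcont.integral_hasStrictDerivAt 0 t).hasDerivAt

theorem strictMonoOn_deriv (h : IsNFunction φ φ') (hc : 0 < c)
    (huc : UniformlyConvexWith c C φ') : StrictMonoOn φ' (Ici 0) := by
  intro t ht s _ hts
  have hs : 0 < s := ht.trans_lt hts
  have hφs := h.deriv_pos s hs
  have := sub_pos.2 hts
  exact sub_pos.1 (lt_of_lt_of_le (by positivity) (huc.mul_sub_le ht hts.le))

theorem irlsWeight_rcInv_aphi (h : IsNFunction φ φ') (hmono : StrictMonoOn φ' (Ici 0)) (t : ℝ) :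
    irlsWeight (rcInv φ') (Aphi φ' t) = (irlsWeight φ' t)⁻¹ := by
  rw [irlsWeight, h.abs_aphi, rcInv_apply_of_strictMonoOn hmono (abs_nonneg t), irlsWeight, inv_div]

theorem aphi_rcInv_aphi (h : IsNFunction φ φ') (hmono : StrictMonoOn φ' (Ici 0)) (t : ℝ) :
    Aphi (rcInv φ') (Aphi φ' t) = t := by
  rcases eq_or_ne t 0 with rfl | ht
  · rw [aphi_zero, aphi_zero]
  · rw [aphi_eq_irlsWeight_mul, h.irlsWeight_rcInv_aphi hmono, aphi_eq_irlsWeight_mul,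
      inv_mul_cancel_left₀ (h.irlsWeight_pos ht).ne']

theorem aphi_rcInv_inv_mul_flux {ι : Type*} (h : IsNFunction φ φ')
    (hmono : StrictMonoOn φ' (Ici 0)) {w : ι → ℝ} (hw : ∀ α, 0 < w α) (z : ι → ℝ) (α : ι) :
    Aphi (rcInv φ') ((w α)⁻¹ * flux w φ' z α) = z α := by
  rw [flux, inv_mul_cancel_left₀ (hw α).ne', h.aphi_rcInv_aphi hmono]

theorem fenchelConj_inv_mul_abs_flux {ι : Type*} (h : IsNFunction φ φ') {w : ι → ℝ}
    (hw : ∀ α, 0 < w α) (z : ι → ℝ) (α : ι) :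
    fenchelConj φ ((w α)⁻¹ * |flux w φ' z α|) = Aphi φ' (z α) * z α - φ |z α| := by
  rw [flux, abs_mul, abs_of_pos (hw α), inv_mul_cancel_left₀ (hw α).ne', h.fenchelConj_abs_aphi]

theorem surjective_flux {ι : Type*} (h : IsNFunction φ φ') (hcont : Continuous (Aphi φ'))
    {w : ι → ℝ} (hw : ∀ α, 0 < w α) : Function.Surjective (flux w φ') := fun σ => by
  choose z hz using fun α => h.surjective_aphi hcont ((w α)⁻¹ * σ α)
  refine ⟨z, funext fun α => ?_⟩
  rw [flux, hz, mul_inv_cancel_left₀ (hw α).ne']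

theorem rcInv_div_abs_mul_aphi (h : IsNFunction φ φ') (hmono : StrictMonoOn φ' (Ici 0)) {w : ℝ}
    (hw : 0 < w) (t : ℝ) :
    rcInv φ' (w⁻¹ * |w * Aphi φ' t|) / |w * Aphi φ' t| = (w * irlsWeight φ' t)⁻¹ := by
  rw [abs_mul, abs_of_pos hw, inv_mul_cancel_left₀ hw.ne', mul_inv,
    ← h.irlsWeight_rcInv_aphi hmono, irlsWeight, div_mul_eq_div_div_swap, div_eq_inv_mul]

theorem quotW_mul_aphi (h : IsNFunction φ φ') (hmono : StrictMonoOn φ' (Ici 0)) {w : ℝ}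
    (hw : 0 < w) (l : ℝ) {t : ℝ} (ht : t ≠ 0) :
    quotW φ' w l (w * Aphi φ' t) = (w * irlsWeight φ' t)⁻¹ := by
  have hflux : w * Aphi φ' t ≠ 0 := by
    rw [aphi_eq_irlsWeight_mul]
    exact mul_ne_zero hw.ne' (mul_ne_zero (h.irlsWeight_pos ht).ne' ht)
  rw [quotW, if_neg hflux, h.rcInv_div_abs_mul_aphi hmono hw]

theorem inv_le_of_tendsto_quot (h : IsNFunction φ φ') (hmono : StrictMonoOn φ' (Ici 0))
    (hcont : Continuous (Aphi φ')) (hκ : MonotoneOn (fun t => φ' t / t) (Ioi 0)) {w l : ℝ}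
    (hw : 0 < w) (hl : Tendsto (fun t : ℝ => rcInv φ' (w⁻¹ * t) / t) (𝓝[>] 0) (𝓝 l))
    {t : ℝ} (ht : t ≠ 0) : (w * irlsWeight φ' t)⁻¹ ≤ l := by
  have hpos {s : ℝ} (hs : 0 < s) : 0 < w * Aphi φ' s := by
    rw [h.aphi_of_nonneg hs.le]
    exact mul_pos hw (h.deriv_pos s hs)
  have hflux : Tendsto (fun s => w * Aphi φ' s) (𝓝[>] 0) (𝓝[>] 0) := by
    refine tendsto_nhdsWithin_iff.2 ⟨?_, by filter_upwards [self_mem_nhdsWithin] with s using hpos⟩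
    have := (hcont.const_mul w).tendsto 0
    rw [aphi_zero, mul_zero] at this
    exact this.mono_left nhdsWithin_le_nhds
  refine ge_of_tendsto (hl.comp hflux) ?_
  filter_upwards [Ioo_mem_nhdsGT (abs_pos.2 ht)] with s ⟨hs, hst⟩
  have hκs := h.irlsWeight_pos hs.ne'
  rw [Function.comp_apply, ← abs_of_pos (hpos hs), h.rcInv_div_abs_mul_aphi hmono hw]
  gcongr
  exact h.irlsWeight_le_irlsWeight hκ ((abs_of_pos hs).trans_le hst.le)

theorem inv_le_quotW (h : IsNFunction φ φ') (hmono : StrictMonoOn φ' (Ici 0))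
    (hcont : Continuous (Aphi φ')) (hκ : MonotoneOn (fun t => φ' t / t) (Ioi 0)) {w l : ℝ}
    (hw : 0 < w) (hl : Tendsto (fun t : ℝ => rcInv φ' (w⁻¹ * t) / t) (𝓝[>] 0) (𝓝 l))
    {z t : ℝ} (ht : t ≠ 0) (hzt : |z| ≤ |t|) :
    (w * irlsWeight φ' t)⁻¹ ≤ quotW φ' w l (w * Aphi φ' z) := by
  rcases eq_or_ne z 0 with rfl | hz
  · rw [aphi_zero, mul_zero, quotW, if_pos rfl]
    exact h.inv_le_of_tendsto_quot hmono hcont hκ hw hl ht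
  · have hκz := h.irlsWeight_pos hz
    rw [h.quotW_mul_aphi hmono hw l hz]
    gcongr
    exact h.irlsWeight_le_irlsWeight hκ hzt

theorem quotW_pos (h : IsNFunction φ φ') (hmono : StrictMonoOn φ' (Ici 0))
    (hcont : Continuous (Aphi φ')) (hκ : MonotoneOn (fun t => φ' t / t) (Ioi 0)) {w l : ℝ}
    (hw : 0 < w) (hl : Tendsto (fun t : ℝ => rcInv φ' (w⁻¹ * t) / t) (𝓝[>] 0) (𝓝 l)) (z : ℝ) :
    0 < quotW φ' w l (w * Aphi φ' z) := by
  have ht : |z| + 1 ≠ 0 := by positivity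
  exact (inv_pos.2 (mul_pos hw (h.irlsWeight_pos ht))).trans_le
    (h.inv_le_quotW hmono hcont hκ hw hl ht ((lt_add_one _).le.trans (le_abs_self _)))

theorem quotW_mul_mul_aphi (h : IsNFunction φ φ') (hmono : StrictMonoOn φ' (Ici 0)) {w : ℝ}
    (hw : 0 < w) (l z : ℝ) : quotW φ' w l (w * Aphi φ' z) * (w * Aphi φ' z) = z := by
  rcases eq_or_ne z 0 with rfl | hz
  · rw [aphi_zero, mul_zero, mul_zero]
  · have hκz := (h.irlsWeight_pos hz).ne'
    rw [h.quotW_mul_aphi hmono hw l hz, aphi_eq_irlsWeight_mul, ← mul_assoc w,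
      inv_mul_cancel_left₀ (mul_ne_zero hw.ne' hκz)]

theorem mul_irlsWeight_le_inv_quotW (h : IsNFunction φ φ') (hmono : StrictMonoOn φ' (Ici 0))
    (hcont : Continuous (Aphi φ')) (hκ : MonotoneOn (fun t => φ' t / t) (Ioi 0)) {w l : ℝ}
    (hw : 0 < w) (hl : Tendsto (fun t : ℝ => rcInv φ' (w⁻¹ * t) / t) (𝓝[>] 0) (𝓝 l)) (z : ℝ) :
    w * irlsWeight φ' z ≤ (quotW φ' w l (w * Aphi φ' z))⁻¹ := by
  rcases eq_or_ne z 0 with rfl | hz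
  · rw [irlsWeight_zero, mul_zero]
    exact (inv_pos.2 (h.quotW_pos hmono hcont hκ hw hl 0)).le
  · rw [h.quotW_mul_aphi hmono hw l hz, inv_inv]

theorem inv_quotW_mul_sq_le (h : IsNFunction φ φ') (hmono : StrictMonoOn φ' (Ici 0))
    (hcont : Continuous (Aphi φ')) (hκ : MonotoneOn (fun t => φ' t / t) (Ioi 0)) {w l : ℝ}
    (hw : 0 < w) (hl : Tendsto (fun t : ℝ => rcInv φ' (w⁻¹ * t) / t) (𝓝[>] 0) (𝓝 l))
    (y z : ℝ) :
    (quotW φ' w l (w * Aphi φ' z))⁻¹ * (y - z) ^ 2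
      ≤ w * (max (irlsWeight φ' y) (irlsWeight φ' z) * (y - z) ^ 2) := by
  rcases eq_or_ne y z with rfl | hyz
  · rw [sub_self, zero_pow two_ne_zero, mul_zero, mul_zero, mul_zero]
  rw [← mul_assoc]
  have hle {t : ℝ} (ht : t ≠ 0) (hzt : |z| ≤ |t|) :
      (quotW φ' w l (w * Aphi φ' z))⁻¹ ≤ w * irlsWeight φ' t :=
    inv_le_of_inv_le₀ (mul_pos hw (h.irlsWeight_pos ht))
      (h.inv_le_quotW hmono hcont hκ hw hl ht hzt)
  gcongr
  rcases eq_or_ne z 0 with rfl | hz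
  · exact (hle hyz (abs_zero.trans_le (abs_nonneg y))).trans (by gcongr; exact le_max_left _ _)
  · exact (hle hz le_rfl).trans (by gcongr; exact le_max_right _ _)

end IsNFunction

section WeightedSums

variable {ι : Type*} [Fintype ι] {φ φ' : ℝ → ℝ} {c C : ℝ} {w y z : ι → ℝ}

theorem sum_mul_sq_sub_le_of_orthogonal {K x y z : ι → ℝ} (hK : ∀ α, 0 ≤ K α)
    (horth : ∑ α, K α * (x α - z α) * (x α - y α) = 0) :
    ∑ α, K α * (x α - z α) ^ 2 ≤ ∑ α, K α * (y α - z α) ^ 2 :=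
  calc ∑ α, K α * (x α - z α) ^ 2 ≤ ∑ α, K α * (x α - z α) ^ 2 + ∑ α, K α * (x α - y α) ^ 2 :=
        le_add_of_nonneg_right (Finset.sum_nonneg fun α _ => mul_nonneg (hK α) (sq_nonneg _))
    _ = ∑ α, K α * (y α - z α) ^ 2 + 2 * ∑ α, K α * (x α - z α) * (x α - y α) := by
        rw [Finset.mul_sum, ← Finset.sum_add_distrib, ← Finset.sum_add_distrib]
        exact Finset.sum_congr rfl fun α _ => by ring
    _ = ∑ α, K α * (y α - z α) ^ 2 := by rw [horth, mul_zero, add_zero]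

theorem sum_mul_sq_abs_vphi_sub_le (h : IsNFunction φ φ') (huc : UniformlyConvexWith c C φ')
    (hκ : MonotoneOn (fun t => φ' t / t) (Ioi 0)) (hw : ∀ α, 0 < w α) :
    ∑ α, w α * |Vphi φ' (y α) - Vphi φ' (z α)| ^ 2 ≤ (1 + C) ^ 2 * quadDist w φ' y z := by
  rw [quadDist, Finset.mul_sum]
  refine Finset.sum_le_sum fun α _ => ?_
  rw [sq_abs, mul_left_comm]
  exact mul_le_mul_of_nonneg_left (h.sq_vphi_sub_le huc hκ _ _) (hw α).le

theorem mul_quadDist_le_sum_bregman (h : IsNFunction φ φ') (hc : 0 < c)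
    (huc : UniformlyConvexWith c C φ') (hκ : MonotoneOn (fun t => φ' t / t) (Ioi 0))
    (hw : ∀ α, 0 < w α) :
    c ^ 2 / (16 * C) * quadDist w φ' y z ≤ ∑ α, w α * bregman φ φ' (y α) (z α) := by
  rw [quadDist, Finset.mul_sum]
  refine Finset.sum_le_sum fun α _ => ?_
  rw [mul_left_comm]
  exact mul_le_mul_of_nonneg_left (h.mul_sq_le_bregman hc huc hκ _ _) (hw α).le

/- With `K` the reciprocals of the IRLS weights, `flux w φ' z = K z` and `σ = K x`, so `horth` makes
`x` the `K`-orthogonal projection of `z` onto the line through `x` and `y`. -/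
theorem sum_irlsWeight_mul_sq_le_quadDist (h : IsNFunction φ φ')
    (hmono : StrictMonoOn φ' (Ici 0)) (hcont : Continuous (Aphi φ'))
    (hκ : MonotoneOn (fun t => φ' t / t) (Ioi 0)) (hw : ∀ α, 0 < w α) {L σ x : ι → ℝ}
    (hL : ∀ α, Tendsto (fun t : ℝ => rcInv φ' ((w α)⁻¹ * t) / t) (𝓝[>] 0) (𝓝 (L α)))
    (hx : ∀ α, quotW φ' (w α) (L α) (flux w φ' z α) * σ α = x α)
    (horth : ∑ α, (σ α - flux w φ' z α) * (x α - y α) = 0) :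
    ∑ α, w α * irlsWeight φ' (z α) * |z α - x α| ^ 2 ≤ quadDist w φ' y z := by
  set q := fun α => quotW φ' (w α) (L α) (flux w φ' z α)
  have hq (α : ι) : 0 < q α := h.quotW_pos hmono hcont hκ (hw α) (hL α) (z α)
  have hz (α : ι) : flux w φ' z α = (q α)⁻¹ * z α :=
    (eq_inv_mul_iff_mul_eq₀ (hq α).ne').2 (h.quotW_mul_mul_aphi hmono (hw α) (L α) (z α))
  have hσ (α : ι) : σ α = (q α)⁻¹ * x α := (eq_inv_mul_iff_mul_eq₀ (hq α).ne').2 (hx α)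
  simp only [hσ, hz, ← mul_sub] at horth
  calc ∑ α, w α * irlsWeight φ' (z α) * |z α - x α| ^ 2 ≤ ∑ α, (q α)⁻¹ * (x α - z α) ^ 2 :=
        Finset.sum_le_sum fun α _ => by
          rw [abs_sub_comm, sq_abs]
          exact mul_le_mul_of_nonneg_right
            (h.mul_irlsWeight_le_inv_quotW hmono hcont hκ (hw α) (hL α) (z α)) (sq_nonneg _)
    _ ≤ ∑ α, (q α)⁻¹ * (y α - z α) ^ 2 :=
        sum_mul_sq_sub_le_of_orthogonal (fun α => (inv_pos.2 (hq α)).le) horth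
    _ ≤ quadDist w φ' y z := Finset.sum_le_sum fun α _ =>
        h.inv_quotW_mul_sq_le hmono hcont hκ (hw α) (hL α) (y α) (z α)

theorem quotW_mul_eq_of_saddlePoint {ψ : ℝ → ℝ} {L σ σ' x : ι → ℝ}
    (hsys : ∀ τ : ι → ℝ,
      ∑ α, quotW ψ (w α) (L α) (σ α) * σ' α * τ α - ∑ α, τ α * x α = 0) (α : ι) :
    quotW ψ (w α) (L α) (σ α) * σ' α = x α := by
  classical
  simpa only [Pi.single_apply, mul_ite, mul_one, mul_zero, ite_mul, one_mul, zero_mul,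
    Finset.sum_ite_eq', Finset.mem_univ, if_true, sub_eq_zero] using hsys (Pi.single α 1)

end WeightedSums

section Energies

variable {N M : ℕ} {φ φ' : ℝ → ℝ} {w : Fin M → ℝ} {B : (Fin N → ℝ) →ₗ[ℝ] (Fin M → ℝ)}
  {V₀ : Submodule ℝ (Fin N → ℝ)} {f g y : Fin N → ℝ}

theorem sum_sub_mul_eq_zero_of_mem_sigmaF {σ τ : Fin M → ℝ} (hσ : σ ∈ SigmaF B V₀ f)
    (hτ : τ ∈ SigmaF B V₀ f) {v : Fin N → ℝ} (hv : v ∈ V₀) :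
    ∑ α, (σ α - τ α) * B v α = 0 := by
  simp only [sub_mul, Finset.sum_sub_distrib, hσ v hv, hτ v hv, sub_self]

theorem hasDerivAt_primalJ_add_smul (h : IsNFunction φ φ') (hcont : Continuous (Aphi φ'))
    (v : Fin N → ℝ) :
    HasDerivAt (fun t : ℝ => primalJ w φ B f (y + t • v))
      (∑ α, flux w φ' (B y) α * B v α - ∑ i, f i * v i) 0 := by
  have hline (a b : ℝ) : HasDerivAt (fun t : ℝ => a + t * b) b 0 := by
    simpa only [one_mul] using ((hasDerivAt_id' (0 : ℝ)).mul_const b).const_add a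
  simp only [primalJ, map_add, map_smul, Pi.add_apply, Pi.smul_apply, smul_eq_mul]
  refine .sub (.fun_sum fun α _ => ?_) (.fun_sum fun i _ => (hline _ _).const_mul _)
  have hφ := h.hasDerivAt_comp_abs hcont (B y α)
  rw [flux, mul_assoc]
  refine (hφ.comp_of_eq 0 (hline _ _) ?_).const_mul (w α)
  rw [zero_mul, add_zero]

theorem flux_mem_sigmaF_of_forall_primalJ_le (h : IsNFunction φ φ') (hcont : Continuous (Aphi φ'))
    (hmin : ∀ v ∈ V₀, primalJ w φ B f y ≤ primalJ w φ B f (y + v)) :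
    flux w φ' (B y) ∈ SigmaF B V₀ f := by
  intro v hv
  refine sub_eq_zero.1 (IsLocalMin.hasDerivAt_eq_zero (.of_forall fun t => ?_)
    (hasDerivAt_primalJ_add_smul h hcont v))
  simpa only [zero_smul, add_zero] using hmin (t • v) (V₀.smul_mem t hv)

theorem dualJ_flux_sub_dualJ_flux (h : IsNFunction φ φ') (hw : ∀ α, 0 < w α) {z : Fin M → ℝ}
    {u : Fin N → ℝ} (hu : u ∈ V₀) (hz : flux w φ' z ∈ SigmaF B V₀ f)
    (hy : flux w φ' (B (u + g)) ∈ SigmaF B V₀ f) :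
    dualJ w (fenchelConj φ) B g (flux w φ' z)
        - dualJ w (fenchelConj φ) B g (flux w φ' (B (u + g)))
      = ∑ α, w α * bregman φ φ' (B (u + g) α) (z α) := by
  have horth := sum_sub_mul_eq_zero_of_mem_sigmaF hz hy hu
  simp only [dualJ, h.fenchelConj_inv_mul_abs_flux hw]
  rw [← sub_zero (_ - _), ← horth]
  simp only [← Finset.sum_sub_distrib, flux, bregman, map_add, Pi.add_apply]
  exact Finset.sum_congr rfl fun α _ => by ring

end Energies

theorem primal_natural_distance_convergence_general {N M : ℕ} {φ φ' : ℝ → ℝ} {c C : ℝ}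
    {B : (Fin N → ℝ) →ₗ[ℝ] (Fin M → ℝ)} {V₀ : Submodule ℝ (Fin N → ℝ)} {g f : Fin N → ℝ}
    {w L : Fin M → ℝ} (h : IsNFunction φ φ') (hc : 0 < c) (huc : UniformlyConvexWith c C φ')
    (hκ : MonotoneOn (fun t => φ' t / t) (Ioi 0)) (hw : ∀ α, 0 < w α)
    (hL : ∀ α, Tendsto (fun t : ℝ => rcInv φ' ((w α)⁻¹ * t) / t) (𝓝[>] 0) (𝓝 (L α)))
    {u : Fin N → ℝ} (hu : u ∈ V₀)
    (humin : ∀ v ∈ V₀, primalJ w φ B f (u + g) ≤ primalJ w φ B f (v + g))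
    {σmin σn σn1 : Fin M → ℝ}
    (hσmin : ∀ τ ∈ SigmaF B V₀ f,
      dualJ w (fenchelConj φ) B g σmin ≤ dualJ w (fenchelConj φ) B g τ)
    (hσn : σn ∈ SigmaF B V₀ f) (hσn1 : σn1 ∈ SigmaF B V₀ f)
    {un1 : Fin N → ℝ} (hun1 : un1 ∈ V₀)
    (hsys : ∀ τ : Fin M → ℝ, ∑ α, quotW φ' (w α) (L α) (σn α) * σn1 α * τ α
      - ∑ α, τ α * B (un1 + g) α = 0) :
    (∑ α, w α * |Vphi φ' (B (u + g) α) - Vphi φ' (Aphi (rcInv φ') ((w α)⁻¹ * σn α))| ^ 2)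
      + ∑ α, w α * irlsWeight φ' (Aphi (rcInv φ') ((w α)⁻¹ * σn α))
          * |Aphi (rcInv φ') ((w α)⁻¹ * σn α) - B (un1 + g) α| ^ 2
      ≤ ((1 + C) ^ 2 + 1) / (c ^ 2 / (16 * C))
        * (dualJ w (fenchelConj φ) B g σn - dualJ w (fenchelConj φ) B g σmin) := by
  have hC : 0 < C := one_pos.trans_le (h.one_le_uniformConvexity huc)
  have hcont := h.continuous_aphi huc hκ
  have hmono := h.strictMonoOn_deriv hc huc
  obtain ⟨z, rfl⟩ := h.surjective_flux hcont hw σn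
  simp only [h.aphi_rcInv_inv_mul_flux hmono hw]
  have hy : flux w φ' (B (u + g)) ∈ SigmaF B V₀ f :=
    flux_mem_sigmaF_of_forall_primalJ_le h hcont fun v hv => by
      rw [add_right_comm]
      exact humin (u + v) (V₀.add_mem hu hv)
  have horth : ∑ α, (σn1 α - flux w φ' z α) * (B (un1 + g) α - B (u + g) α) = 0 := by
    simpa only [map_add, map_sub, Pi.add_apply, Pi.sub_apply, add_sub_add_right_eq_sub]
      using sum_sub_mul_eq_zero_of_mem_sigmaF hσn1 hσn (V₀.sub_mem hun1 hu)
  calc _ ≤ (1 + C) ^ 2 * quadDist w φ' (B (u + g)) z + quadDist w φ' (B (u + g)) z :=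
        add_le_add (sum_mul_sq_abs_vphi_sub_le h huc hκ hw)
          (sum_irlsWeight_mul_sq_le_quadDist h hmono hcont hκ hw hL
            (quotW_mul_eq_of_saddlePoint hsys) horth)
    _ = ((1 + C) ^ 2 + 1) / (c ^ 2 / (16 * C))
          * (c ^ 2 / (16 * C) * quadDist w φ' (B (u + g)) z) := by field_simp
    _ ≤ ((1 + C) ^ 2 + 1) / (c ^ 2 / (16 * C)) * ∑ α, w α * bregman φ φ' (B (u + g) α) (z α) := by
        gcongr
        exact mul_quadDist_le_sum_bregman h hc huc hκ hw
    _ ≤ _ := by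
        rw [← dualJ_flux_sub_dualJ_flux h hw hu hσn hy]
        exact mul_le_mul_of_nonneg_left (sub_le_sub_left (hσmin _ hy) _) (by positivity)

/-- convergence of the primal variable in the natural distance.
With `zⁿ_α = A_{φ*}(w_α⁻¹σⁿ_α)` and `u_g^{n+1} = uⁿ⁺¹ + g`, there is a constant
`C` depending only on the uniform convexity constants of `φ` with
`Σ_α w_α|V_φ((Bu_g)_α) − V_φ(zⁿ_α)|² + Σ_α w_α (φ'(|zⁿ_α|)/|zⁿ_α|)|zⁿ_α − (Bu_g^{n+1})_α|²
  ≤ C (J*(σⁿ) − J*(σ))`. -/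
theorem primal_natural_distance_convergence (c₁ C₁ : ℝ) (hc₁ : 0 < c₁) (hc₁C₁ : c₁ ≤ C₁) :
    ∃ C : ℝ, 0 < C ∧
    ∀ (φ φ' : ℝ → ℝ), IsNFunction φ φ' →
    (∀ t s : ℝ, 0 ≤ t → t < s →
      c₁ * (φ' s / s) ≤ (φ' t - φ' s) / (t - s) ∧
      (φ' t - φ' s) / (t - s) ≤ C₁ * (φ' s / s)) →
    (∀ t T : ℝ, 0 < t → t ≤ T → φ' t / t ≤ φ' T / T) →
    ∀ (N M : ℕ) (B : (Fin N → ℝ) →ₗ[ℝ] (Fin M → ℝ)) (V₀ : Submodule ℝ (Fin N → ℝ)),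
    (∀ v ∈ V₀, B v = 0 → v = 0) →
    ∀ (g f : Fin N → ℝ) (w : Fin M → ℝ), (∀ α, 0 < w α) →
    ∀ (L : Fin M → ℝ),
    (∀ α, Tendsto (fun t : ℝ => rcInv φ' ((w α)⁻¹ * t) / t)
      (nhdsWithin 0 (Set.Ioi 0)) (nhds (L α))) →
    ∀ (u : Fin N → ℝ), u ∈ V₀ →
    (∀ v ∈ V₀, primalJ w φ B f (u + g) ≤ primalJ w φ B f (v + g)) →
    ∀ σmin ∈ SigmaF B V₀ f,
    (∀ τ ∈ SigmaF B V₀ f,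
      dualJ w (fenchelConj φ) B g σmin ≤ dualJ w (fenchelConj φ) B g τ) →
    ∀ (σn σn1 : Fin M → ℝ) (un1 : Fin N → ℝ),
    σn ∈ SigmaF B V₀ f → σn1 ∈ SigmaF B V₀ f → un1 ∈ V₀ →
    (∀ τ : Fin M → ℝ,
      (∑ α, quotW φ' (w α) (L α) (σn α) * σn1 α * τ α)
        - (∑ α, τ α * B (un1 + g) α) = 0) →
    (∀ v ∈ V₀, (∑ α, σn1 α * B v α) = ∑ i, f i * v i) →
    (∑ α, w α * |Vphi φ' (B (u + g) α)
        - Vphi φ' (Aphi (rcInv φ') ((w α)⁻¹ * σn α))| ^ 2)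
      + (∑ α, w α * (φ' (|Aphi (rcInv φ') ((w α)⁻¹ * σn α)|)
            / |Aphi (rcInv φ') ((w α)⁻¹ * σn α)|)
          * |Aphi (rcInv φ') ((w α)⁻¹ * σn α) - B (un1 + g) α| ^ 2)
      ≤ C * (dualJ w (fenchelConj φ) B g σn - dualJ w (fenchelConj φ) B g σmin) := by
  have hC₁ : 0 < C₁ := hc₁.trans_le hc₁C₁
  refine ⟨((1 + C₁) ^ 2 + 1) / (c₁ ^ 2 / (16 * C₁)), by positivity, ?_⟩
  intro φ φ' h huc hκ _ _ _ _ _ _ _ _ hw _ hL _ hu humin _ _ hσmin _ _ _ hσn hσn1 hun1 hsys _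
  exact primal_natural_distance_convergence_general h hc₁ huc
    (fun t ht T _ htT => hκ t T ht htT) hw hL hu humin hσmin hσn hσn1 hun1 hsys
end
end

section
/- Let φ be an N-function such that t ↦ φ'(t)/t is non-decreasing on (0,∞), and for a relaxation interval δ = [δ₋, δ₊] ⊂ (0,∞) let φ_δ be the shifted regularization and φ*_δ its Fenchel-type dual integrand. Then the regularization is pointwise monotone in δ: for nested intervals δ = [δ₋, δ₊] ⊆ Δ = [Δ₋, Δ₊] ⊂ (0,∞) (i.e. Δ₋ ≤ δ₋ ≤ δ₊ ≤ Δ₊) one has φ_δ(t) ≤ φ_Δ(t) and φ*_δ(t) ≥ φ*_Δ(t) for all t ≥ 0. Consequently, J_δ(v) ≤ J_Δ(v) for all v ∈ ℝᴺ and J*_δ(τ) ≥ J*_Δ(τ) for all τ ∈ ℝᴹ. -/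
open Filter MeasureTheory Set Topology

noncomputable section

/-- Shifted regularization `φ_δ` for a relaxation interval `[δ₋, δ₊]`. -/
def phiDelta (φ φ' : ℝ → ℝ) (δm δp t : ℝ) : ℝ :=
  if t < δm then φ' δm / (2 * δm) * t ^ 2 + φ δm - δm / 2 * φ' δm
  else if t ≤ δp then φ t
  else φ' δp / (2 * δp) * t ^ 2 + φ δp - δp / 2 * φ' δp

/-- Derivative `φ_δ'(t) = t·(φ'(δ₋)/δ₋ ∨ (φ'(t)/t ∧ φ'(δ₊)/δ₊))` of the
regularization. -/
def phiDeltaDeriv (φ' : ℝ → ℝ) (δm δp t : ℝ) : ℝ :=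
  t * max (φ' δm / δm) (min (φ' t / t) (φ' δp / δp))

/-- Shifted dual integrand `φ*_δ(r) = ∫₀ʳ (φ_δ')⁻¹(s) ds − φ(δ₋) + (δ₋/2)φ'(δ₋)`. -/
def phiDeltaConj (φ φ' : ℝ → ℝ) (δm δp r : ℝ) : ℝ :=
  (∫ s in (0:ℝ)..r, rcInv (phiDeltaDeriv φ' δm δp) s) - φ δm + δm / 2 * φ' δm

/-!
The slope `φ_δ'(t) / t` is `φ'(t) / t` clamped to its values at `δ₋` and `δ₊`, so enlarging the
interval raises `φ_δ'` to the right of `δ₋` and lowers it to the left, while the value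
`φ_δ(δ₋) = φ(δ₋)` stays the same. Integrating from `δ₋` in either direction therefore raises `φ_δ`.

For the dual integrand, let `h = φ_δ'`. The layer-cake formula for `r - h` on `{x ≥ 0 | h x ≤ r}`
identifies `∫₀ʳ h⁻¹` with the integral of `r - h` over that set, and this is the largest value of
`s ↦ r s - ∫₀ˢ h`. Hence `φ*_δ` is the Fenchel conjugate of `φ_δ`, with the supremum attained, and
conjugation reverses order.
-/

section GeneralizedInverse

variable {h : ℝ → ℝ}

theorem intervalIntegrable_of_monotoneOn_Ici {a b c : ℝ} (hh : MonotoneOn h (Ici c))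
    (ha : c ≤ a) (hb : c ≤ b) : IntervalIntegrable h volume a b :=
  (hh.mono fun _ hx ↦ (le_min ha hb).trans hx.1).intervalIntegrable

theorem rcInv_nonneg (h : ℝ → ℝ) (r : ℝ) : 0 ≤ rcInv h r :=
  Real.sSup_nonneg fun _ hx ↦ hx.1

theorem le_of_lt_rcInv (hh : MonotoneOn h (Ici 0)) {x r : ℝ} (hx : 0 ≤ x)
    (hxr : x < rcInv h r) : h x ≤ r := by
  have hne : {y : ℝ | 0 ≤ y ∧ h y ≤ r}.Nonempty := by
    by_contra hempty
    rw [rcInv, not_nonempty_iff_eq_empty.1 hempty, Real.sSup_empty] at hxr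
    exact hxr.not_ge hx
  obtain ⟨y, ⟨hy, hyr⟩, hxy⟩ := exists_lt_of_lt_csSup hne hxr
  exact (hh hx hy hxy.le).trans hyr

theorem lt_of_rcInv_lt (htop : Tendsto h atTop atTop) {x r : ℝ} (hx : 0 ≤ x)
    (hxr : rcInv h r < x) : r < h x := by
  have hbdd : BddAbove {y : ℝ | 0 ≤ y ∧ h y ≤ r} := by
    obtain ⟨b, hb⟩ := eventually_atTop.1 (htop.eventually_gt_atTop r)
    exact ⟨b, fun y hy ↦ le_of_not_ge fun hby ↦ (hb y hby).not_ge hy.2⟩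
  by_contra! hle
  exact notMem_of_csSup_lt hxr hbdd ⟨hx, hle⟩

theorem sublevel_ae_eq_Ioc_rcInv (hh : MonotoneOn h (Ici 0)) (htop : Tendsto h atTop atTop)
    (r : ℝ) : {x : ℝ | 0 ≤ x ∧ h x ≤ r} =ᵐ[volume] Ioc 0 (rcInv h r) := by
  refine EventuallyEq.trans ?_ Ico_ae_eq_Ioc
  filter_upwards [compl_mem_ae_iff.2 (measure_singleton (rcInv h r))] with x hne
  refine propext (and_congr_right fun hx ↦ ⟨fun hxr ↦ ?_, le_of_lt_rcInv hh hx⟩)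
  exact lt_of_le_of_ne (le_of_not_gt fun hlt ↦ (lt_of_rcInv_lt htop hx hlt).not_ge hxr) hne

theorem measureReal_sublevel_eq_rcInv (hh : MonotoneOn h (Ici 0))
    (htop : Tendsto h atTop atTop) (r : ℝ) :
    volume.real {x : ℝ | 0 ≤ x ∧ h x ≤ r} = rcInv h r := by
  rw [measureReal_congr (sublevel_ae_eq_Ioc_rcInv hh htop r),
    Real.volume_real_Ioc_of_le (rcInv_nonneg h r), sub_zero]

theorem integral_rcInv (hh : MonotoneOn h (Ici 0)) (htop : Tendsto h atTop atTop)
    (h0 : 0 ≤ h 0) {r : ℝ} (hr : 0 ≤ r) :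
    ∫ u in 0..r, rcInv h u = ∫ x in 0..rcInv h r, (r - h x) := by
  let S : ℝ → Set ℝ := fun u ↦ {x | 0 ≤ x ∧ h x ≤ u}
  have hSae : S r =ᵐ[volume] Ioc 0 (rcInv h r) := sublevel_ae_eq_Ioc_rcInv hh htop r
  have hSmeas : NullMeasurableSet (S r) volume :=
    measurableSet_Ioc.nullMeasurableSet.congr hSae.symm
  have hint : IntegrableOn (fun x ↦ r - h x) (S r) :=
    (intervalIntegrable_const.sub
      (intervalIntegrable_of_monotoneOn_Ici hh le_rfl (rcInv_nonneg h r))).1.congr_set_ae hSae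
  have hlayer (u : ℝ) (hu : 0 ≤ u) :
      (volume.restrict (S r)).real {x | u ≤ r - h x} = rcInv h (r - u) := by
    have hinter : {x | u ≤ r - h x} ∩ S r = S (r - u) := by
      ext x
      exact ⟨fun ⟨hux, hx, _⟩ ↦ ⟨hx, le_sub_comm.1 hux⟩,
        fun ⟨hx, hxu⟩ ↦ ⟨le_sub_comm.1 hxu, hx, hxu.trans (sub_le_self r hu)⟩⟩
    rw [measureReal_def, Measure.restrict_apply₀' hSmeas, hinter]
    exact measureReal_sublevel_eq_rcInv hh htop (r - u)
  calc ∫ u in 0..r, rcInv h u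
      = ∫ u in 0..r, rcInv h (r - u) := by
        rw [intervalIntegral.integral_comp_sub_left, sub_self, sub_zero]
    _ = ∫ u in Ioc 0 r, (volume.restrict (S r)).real {x | u ≤ r - h x} := by
        rw [intervalIntegral.integral_of_le hr]
        exact setIntegral_congr_fun measurableSet_Ioc fun u hu ↦ (hlayer u hu.1.le).symm
    _ = ∫ x in S r, (r - h x) := by
        refine (hint.integral_eq_integral_Ioc_meas_le ?_ ?_).symm
        · filter_upwards [ae_restrict_mem₀ hSmeas] with x hx using sub_nonneg.2 hx.2
        · filter_upwards [ae_restrict_mem₀ hSmeas] with x hx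
          linarith [hh self_mem_Ici hx.1 hx.1]
    _ = ∫ x in 0..rcInv h r, (r - h x) := by
        rw [setIntegral_congr_set hSae, intervalIntegral.integral_of_le (rcInv_nonneg h r)]

theorem integral_const_sub_le_integral_rcInv (hh : MonotoneOn h (Ici 0))
    (htop : Tendsto h atTop atTop) (r : ℝ) {s : ℝ} (hs : 0 ≤ s) :
    ∫ x in 0..s, (r - h x) ≤ ∫ x in 0..rcInv h r, (r - h x) := by
  have hR := rcInv_nonneg h r
  have hint {a b : ℝ} (ha : 0 ≤ a) (hb : 0 ≤ b) :
      IntervalIntegrable (fun x ↦ r - h x) volume a b :=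
    intervalIntegrable_const.sub (intervalIntegrable_of_monotoneOn_Ici hh ha hb)
  rw [← sub_nonneg, intervalIntegral.integral_interval_sub_left (hint le_rfl hR) (hint le_rfl hs)]
  rcases le_total s (rcInv h r) with hsR | hRs
  · rw [← intervalIntegral.integral_zero (a := s) (b := rcInv h r)]
    refine intervalIntegral.integral_mono_on_of_le_Ioo hsR intervalIntegrable_const
      (hint hs hR) fun x hx ↦ sub_nonneg.2 ?_
    exact le_of_lt_rcInv hh (hs.trans hx.1.le) hx.2
  · rw [intervalIntegral.integral_symm, neg_nonneg,
      ← intervalIntegral.integral_zero (a := rcInv h r) (b := s)]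
    refine intervalIntegral.integral_mono_on_of_le_Ioo hRs (hint hR hs)
      intervalIntegrable_const fun x hx ↦ sub_nonpos.2 ?_
    exact (lt_of_rcInv_lt htop (hR.trans hx.1.le) hx.1).le

theorem isGreatest_integral_rcInv (hh : MonotoneOn h (Ici 0)) (htop : Tendsto h atTop atTop)
    (h0 : 0 ≤ h 0) {r : ℝ} (hr : 0 ≤ r) :
    IsGreatest {x : ℝ | ∃ s, 0 ≤ s ∧ x = r * s - ∫ t in 0..s, h t}
      (∫ u in 0..r, rcInv h u) := by
  have hsplit {s : ℝ} (hs : 0 ≤ s) :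
      ∫ t in 0..s, (r - h t) = r * s - ∫ t in 0..s, h t := by
    rw [intervalIntegral.integral_sub intervalIntegrable_const
      (intervalIntegrable_of_monotoneOn_Ici hh le_rfl hs), intervalIntegral.integral_const]
    simp [mul_comm]
  rw [integral_rcInv hh htop h0 hr]
  refine ⟨⟨rcInv h r, rcInv_nonneg h r, hsplit (rcInv_nonneg h r)⟩, ?_⟩
  rintro _ ⟨s, hs, rfl⟩
  rw [← hsplit hs]
  exact integral_const_sub_le_integral_rcInv hh htop r hs

end GeneralizedInverse

section Regularization

variable {φ φ' : ℝ → ℝ} {δm δp Δm Δp t : ℝ}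

theorem phiDeltaDeriv_zero (φ' : ℝ → ℝ) (δm δp : ℝ) : phiDeltaDeriv φ' δm δp 0 = 0 :=
  zero_mul _

theorem phiDeltaDeriv_of_le (hratio : MonotoneOn (fun t ↦ φ' t / t) (Ioi 0)) (ht : 0 ≤ t)
    (htm : t ≤ δm) : phiDeltaDeriv φ' δm δp t = t * (φ' δm / δm) := by
  rcases ht.eq_or_lt with rfl | ht
  · rw [phiDeltaDeriv_zero, zero_mul]
  · rw [phiDeltaDeriv, max_eq_left ((min_le_left _ _).trans
      (hratio ht (ht.trans_le htm) htm))]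

theorem phiDeltaDeriv_of_mem_Icc (hratio : MonotoneOn (fun t ↦ φ' t / t) (Ioi 0))
    (hδm : 0 < δm) (ht : t ∈ Icc δm δp) : phiDeltaDeriv φ' δm δp t = φ' t := by
  have ht0 : 0 < t := hδm.trans_le ht.1
  rw [phiDeltaDeriv, min_eq_left (hratio ht0 (ht0.trans_le ht.2) ht.2),
    max_eq_right (hratio hδm ht0 ht.1), mul_div_cancel₀ _ ht0.ne']

theorem phiDeltaDeriv_of_ge (hratio : MonotoneOn (fun t ↦ φ' t / t) (Ioi 0)) (hδm : 0 < δm)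
    (hδ : δm ≤ δp) (ht : δp ≤ t) : phiDeltaDeriv φ' δm δp t = t * (φ' δp / δp) := by
  have hδp : 0 < δp := hδm.trans_le hδ
  rw [phiDeltaDeriv, min_eq_right (hratio hδp (hδp.trans_le ht) ht),
    max_eq_right (hratio hδm hδp hδ)]

theorem phiDeltaDeriv_monotoneOn (hratio : MonotoneOn (fun t ↦ φ' t / t) (Ioi 0))
    (hδm : 0 < δm) (hnonneg : 0 ≤ φ' δm) : MonotoneOn (phiDeltaDeriv φ' δm δp) (Ici 0) := by
  have hslope (t : ℝ) : 0 ≤ max (φ' δm / δm) (min (φ' t / t) (φ' δp / δp)) :=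
    (div_nonneg hnonneg hδm.le).trans (le_max_left _ _)
  intro s hs t ht hst
  rcases (mem_Ici.1 hs).eq_or_lt with rfl | hs
  · rw [phiDeltaDeriv_zero]
    exact mul_nonneg ht (hslope t)
  · exact mul_le_mul hst
      (max_le_max le_rfl (min_le_min (hratio hs (hs.trans_le hst) hst) le_rfl)) (hslope s) ht

theorem phiDeltaDeriv_intervalIntegrable (hratio : MonotoneOn (fun t ↦ φ' t / t) (Ioi 0))
    (hδm : 0 < δm) {a b : ℝ} (ha : 0 ≤ a) (hb : 0 ≤ b) :
    IntervalIntegrable (phiDeltaDeriv φ' δm δp) volume a b := by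
  have hfrom {t : ℝ} (ht : 0 ≤ t) : IntervalIntegrable (phiDeltaDeriv φ' δm δp) volume δm t := by
    rcases le_total t δm with htm | htm
    · refine (intervalIntegral.intervalIntegrable_id.mul_const (φ' δm / δm)).congr fun s hs ↦ ?_
      rw [uIoc_of_ge htm] at hs
      exact (phiDeltaDeriv_of_le hratio (ht.trans hs.1.le) hs.2).symm
    · have hslope : MonotoneOn (fun s ↦ max (φ' δm / δm) (min (φ' s / s) (φ' δp / δp)))
          (Ioi 0) := fun s hs u hu hsu ↦
        max_le_max le_rfl (min_le_min (hratio hs hu hsu) le_rfl)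
      exact (hslope.mono fun s hs ↦ hδm.trans_le
        (uIcc_of_le htm ▸ hs).1).intervalIntegrable.continuousOn_mul continuousOn_id
  exact (hfrom ha).symm.trans (hfrom hb)

theorem phiDeltaDeriv_tendsto_atTop (hratio : MonotoneOn (fun t ↦ φ' t / t) (Ioi 0))
    (hδm : 0 < δm) (hδ : δm ≤ δp) (hpos : 0 < φ' δp) :
    Tendsto (phiDeltaDeriv φ' δm δp) atTop atTop := by
  have hslope : 0 < φ' δp / δp := div_pos hpos (hδm.trans_le hδ)
  refine (tendsto_id.atTop_mul_const hslope).congr' ?_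
  filter_upwards [eventually_ge_atTop δp] with t ht
  exact (phiDeltaDeriv_of_ge hratio hδm hδ ht).symm

theorem phiDeltaDeriv_le_of_le (hratio : MonotoneOn (fun t ↦ φ' t / t) (Ioi 0)) (hΔm : 0 < Δm)
    (hm : Δm ≤ δm) (ht : 0 ≤ t) (htm : t ≤ δm) :
    phiDeltaDeriv φ' Δm Δp t ≤ phiDeltaDeriv φ' δm δp t := by
  rcases ht.eq_or_lt with rfl | ht
  · simp only [phiDeltaDeriv_zero, le_refl]
  · have hδm : 0 < δm := hΔm.trans_le hm
    rw [phiDeltaDeriv_of_le hratio ht.le htm]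
    exact mul_le_mul_of_nonneg_left
      (max_le (hratio hΔm hδm hm) ((min_le_left _ _).trans (hratio ht hδm htm))) ht.le

theorem phiDeltaDeriv_le_of_ge (hratio : MonotoneOn (fun t ↦ φ' t / t) (Ioi 0)) (hδm : 0 < δm)
    (hδ : δm ≤ δp) (hp : δp ≤ Δp) (ht : δm ≤ t) :
    phiDeltaDeriv φ' δm δp t ≤ phiDeltaDeriv φ' Δm Δp t := by
  have ht0 : 0 < t := hδm.trans_le ht
  have hδp : 0 < δp := hδm.trans_le hδ
  have hslope : φ' δp / δp ≤ φ' Δp / Δp := hratio hδp (hδp.trans_le hp) hp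
  refine mul_le_mul_of_nonneg_left (le_max_of_le_right (max_le (le_min ?_ ?_) ?_)) ht0.le
  · exact hratio hδm ht0 ht
  · exact (hratio hδm hδp hδ).trans hslope
  · exact min_le_min le_rfl hslope

theorem phiDelta_of_mem_Icc (ht : t ∈ Icc δm δp) : phiDelta φ φ' δm δp t = φ t := by
  rw [phiDelta, if_neg ht.1.not_gt, if_pos ht.2]

theorem phiDelta_zero (hδm : 0 < δm) :
    phiDelta φ φ' δm δp 0 = φ δm - δm / 2 * φ' δm := by
  simp [phiDelta, hδm]

theorem integral_mul_const_eq (a b c : ℝ) :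
    ∫ s in a..b, s * c = c / 2 * (b ^ 2 - a ^ 2) := by
  rw [intervalIntegral.integral_mul_const, integral_id]
  ring

theorem integral_phiDeltaDeriv_of_le (hratio : MonotoneOn (fun t ↦ φ' t / t) (Ioi 0))
    (ht : 0 ≤ t) (htm : t ≤ δm) :
    ∫ s in δm..t, phiDeltaDeriv φ' δm δp s = φ' δm / δm / 2 * (t ^ 2 - δm ^ 2) := by
  rw [← integral_mul_const_eq]
  refine intervalIntegral.integral_congr fun s hs ↦ ?_
  rw [uIcc_of_ge htm] at hs
  exact phiDeltaDeriv_of_le hratio (ht.trans hs.1) hs.2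

theorem integral_phiDeltaDeriv_of_mem_Icc
    (hprim : ∀ a b : ℝ, 0 < a → a ≤ b → φ b - φ a = ∫ s in a..b, φ' s)
    (hratio : MonotoneOn (fun t ↦ φ' t / t) (Ioi 0)) (hδm : 0 < δm) (ht : t ∈ Icc δm δp) :
    ∫ s in δm..t, phiDeltaDeriv φ' δm δp s = φ t - φ δm := by
  rw [hprim δm t hδm ht.1]
  refine intervalIntegral.integral_congr fun s hs ↦ ?_
  rw [uIcc_of_le ht.1] at hs
  exact phiDeltaDeriv_of_mem_Icc hratio hδm ⟨hs.1, hs.2.trans ht.2⟩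

theorem integral_phiDeltaDeriv_of_ge (hratio : MonotoneOn (fun t ↦ φ' t / t) (Ioi 0))
    (hδm : 0 < δm) (hδ : δm ≤ δp) (ht : δp ≤ t) :
    ∫ s in δp..t, phiDeltaDeriv φ' δm δp s = φ' δp / δp / 2 * (t ^ 2 - δp ^ 2) := by
  rw [← integral_mul_const_eq]
  refine intervalIntegral.integral_congr fun s hs ↦ ?_
  rw [uIcc_of_le ht] at hs
  exact phiDeltaDeriv_of_ge hratio hδm hδ hs.1

theorem phiDelta_eq_add_integral
    (hprim : ∀ a b : ℝ, 0 < a → a ≤ b → φ b - φ a = ∫ s in a..b, φ' s)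
    (hratio : MonotoneOn (fun t ↦ φ' t / t) (Ioi 0)) (hδm : 0 < δm) (hδ : δm ≤ δp)
    (ht : 0 ≤ t) :
    phiDelta φ φ' δm δp t = φ δm + ∫ s in δm..t, phiDeltaDeriv φ' δm δp s := by
  have hδp : 0 < δp := hδm.trans_le hδ
  rcases lt_or_ge t δm with htm | htm
  · rw [integral_phiDeltaDeriv_of_le hratio ht htm.le, phiDelta, if_pos htm]
    field
  rcases le_or_gt t δp with htp | htp
  · rw [integral_phiDeltaDeriv_of_mem_Icc hprim hratio hδm ⟨htm, htp⟩,
      phiDelta_of_mem_Icc ⟨htm, htp⟩, add_sub_cancel]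
  · rw [← intervalIntegral.integral_add_adjacent_intervals
        (phiDeltaDeriv_intervalIntegrable hratio hδm hδm.le hδp.le)
        (phiDeltaDeriv_intervalIntegrable hratio hδm hδp.le ht),
      integral_phiDeltaDeriv_of_mem_Icc hprim hratio hδm ⟨hδ, le_rfl⟩,
      integral_phiDeltaDeriv_of_ge hratio hδm hδ htp.le, phiDelta, if_neg htm.not_gt,
      if_neg htp.not_ge]
    field

theorem phiDelta_sub_phiDelta
    (hprim : ∀ a b : ℝ, 0 < a → a ≤ b → φ b - φ a = ∫ s in a..b, φ' s)
    (hratio : MonotoneOn (fun t ↦ φ' t / t) (Ioi 0)) (hδm : 0 < δm) (hδ : δm ≤ δp)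
    {a b : ℝ} (ha : 0 ≤ a) (hb : 0 ≤ b) :
    phiDelta φ φ' δm δp b - phiDelta φ φ' δm δp a = ∫ s in a..b, phiDeltaDeriv φ' δm δp s := by
  rw [phiDelta_eq_add_integral hprim hratio hδm hδ ha,
    phiDelta_eq_add_integral hprim hratio hδm hδ hb, add_sub_add_left_eq_sub]
  exact intervalIntegral.integral_interval_sub_left
    (phiDeltaDeriv_intervalIntegrable hratio hδm hδm.le hb)
    (phiDeltaDeriv_intervalIntegrable hratio hδm hδm.le ha)

theorem phiDelta_le_phiDelta
    (hprim : ∀ a b : ℝ, 0 < a → a ≤ b → φ b - φ a = ∫ s in a..b, φ' s)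
    (hratio : MonotoneOn (fun t ↦ φ' t / t) (Ioi 0)) (hΔm : 0 < Δm) (hm : Δm ≤ δm)
    (hδ : δm ≤ δp) (hp : δp ≤ Δp) (ht : 0 ≤ t) :
    phiDelta φ φ' δm δp t ≤ phiDelta φ φ' Δm Δp t := by
  have hδm : 0 < δm := hΔm.trans_le hm
  have hΔ : Δm ≤ Δp := hm.trans (hδ.trans hp)
  have htouch : phiDelta φ φ' δm δp δm = phiDelta φ φ' Δm Δp δm := by
    rw [phiDelta_of_mem_Icc ⟨le_rfl, hδ⟩, phiDelta_of_mem_Icc ⟨hm, hδ.trans hp⟩]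
  rw [← sub_le_sub_iff_right (phiDelta φ φ' δm δp δm),
    phiDelta_sub_phiDelta hprim hratio hδm hδ hδm.le ht, htouch,
    phiDelta_sub_phiDelta hprim hratio hΔm hΔ hδm.le ht]
  rcases le_total t δm with htm | htm
  · rw [intervalIntegral.integral_symm t, intervalIntegral.integral_symm t, neg_le_neg_iff]
    exact intervalIntegral.integral_mono_on htm
      (phiDeltaDeriv_intervalIntegrable hratio hΔm ht hδm.le)
      (phiDeltaDeriv_intervalIntegrable hratio hδm ht hδm.le)
      fun s hs ↦ phiDeltaDeriv_le_of_le hratio hΔm hm (ht.trans hs.1) hs.2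
  · exact intervalIntegral.integral_mono_on htm
      (phiDeltaDeriv_intervalIntegrable hratio hδm hδm.le ht)
      (phiDeltaDeriv_intervalIntegrable hratio hΔm hδm.le ht)
      fun s hs ↦ phiDeltaDeriv_le_of_ge hratio hδm hδ hp hs.1

theorem isGreatest_phiDeltaConj
    (hprim : ∀ a b : ℝ, 0 < a → a ≤ b → φ b - φ a = ∫ s in a..b, φ' s)
    (hratio : MonotoneOn (fun t ↦ φ' t / t) (Ioi 0)) (hδm : 0 < δm) (hδ : δm ≤ δp)
    (hnonneg : 0 ≤ φ' δm) (hpos : 0 < φ' δp) {r : ℝ} (hr : 0 ≤ r) :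
    IsGreatest {x : ℝ | ∃ s, 0 ≤ s ∧ x = r * s - phiDelta φ φ' δm δp s}
      (phiDeltaConj φ φ' δm δp r) := by
  obtain ⟨⟨s, hs, hattained⟩, hub⟩ := isGreatest_integral_rcInv
    (phiDeltaDeriv_monotoneOn (δp := δp) hratio hδm hnonneg)
    (phiDeltaDeriv_tendsto_atTop hratio hδm hδ hpos) (phiDeltaDeriv_zero φ' δm δp).ge hr
  have hconj : phiDeltaConj φ φ' δm δp r =
      (∫ u in 0..r, rcInv (phiDeltaDeriv φ' δm δp) u) - phiDelta φ φ' δm δp 0 := by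
    rw [phiDeltaConj, phiDelta_zero hδm, sub_sub_eq_add_sub, add_sub_right_comm]
  have hsub {s : ℝ} (hs : 0 ≤ s) :=
    phiDelta_sub_phiDelta hprim hratio hδm hδ le_rfl hs
  refine ⟨⟨s, hs, by linarith [hsub hs]⟩, ?_⟩
  rintro _ ⟨s, hs, rfl⟩
  linarith [hsub hs, hub ⟨s, hs, rfl⟩]

theorem phiDeltaConj_le_phiDeltaConj
    (hprim : ∀ a b : ℝ, 0 < a → a ≤ b → φ b - φ a = ∫ s in a..b, φ' s)
    (hratio : MonotoneOn (fun t ↦ φ' t / t) (Ioi 0)) (hΔm : 0 < Δm) (hm : Δm ≤ δm)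
    (hδ : δm ≤ δp) (hp : δp ≤ Δp) (hnonneg : 0 ≤ φ' Δm) (hpos : 0 < φ' δp)
    {r : ℝ} (hr : 0 ≤ r) : phiDeltaConj φ φ' Δm Δp r ≤ phiDeltaConj φ φ' δm δp r := by
  have hδm : 0 < δm := hΔm.trans_le hm
  have hδp : 0 < δp := hδm.trans_le hδ
  have hΔp : 0 < Δp := hδp.trans_le hp
  have hnonneg_δm : 0 ≤ φ' δm := by
    have hslope : 0 ≤ φ' δm / δm := (div_nonneg hnonneg hΔm.le).trans (hratio hΔm hδm hm)
    rwa [le_div_iff₀ hδm, zero_mul] at hslope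
  have hpos_Δp : 0 < φ' Δp := (div_pos_iff_of_pos_right hΔp).1
    ((div_pos hpos hδp).trans_le (hratio hδp hΔp hp))
  obtain ⟨s, hs, hattained⟩ := (isGreatest_phiDeltaConj hprim hratio hΔm
    (hm.trans (hδ.trans hp)) hnonneg hpos_Δp hr).1
  calc phiDeltaConj φ φ' Δm Δp r
      = r * s - phiDelta φ φ' Δm Δp s := hattained
    _ ≤ r * s - phiDelta φ φ' δm δp s :=
      sub_le_sub_left (phiDelta_le_phiDelta hprim hratio hΔm hm hδ hp hs) _
    _ ≤ phiDeltaConj φ φ' δm δp r :=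
      (isGreatest_phiDeltaConj hprim hratio hδm hδ hnonneg_δm hpos hr).2 ⟨s, hs, rfl⟩

end Regularization

theorem primalJ_le_primalJ {N M : ℕ} {w : Fin M → ℝ} (hw : ∀ α, 0 ≤ w α) {ψ χ : ℝ → ℝ}
    (hψχ : ∀ t, 0 ≤ t → ψ t ≤ χ t) (B : (Fin N → ℝ) →ₗ[ℝ] (Fin M → ℝ)) (f v : Fin N → ℝ) :
    primalJ w ψ B f v ≤ primalJ w χ B f v :=
  sub_le_sub_right (Finset.sum_le_sum fun α _ ↦
    mul_le_mul_of_nonneg_left (hψχ _ (abs_nonneg _)) (hw α)) _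

theorem dualJ_le_dualJ {N M : ℕ} {w : Fin M → ℝ} (hw : ∀ α, 0 ≤ w α) {ψ χ : ℝ → ℝ}
    (hψχ : ∀ t, 0 ≤ t → ψ t ≤ χ t) (B : (Fin N → ℝ) →ₗ[ℝ] (Fin M → ℝ)) (g : Fin N → ℝ)
    (τ : Fin M → ℝ) : dualJ w ψ B g τ ≤ dualJ w χ B g τ :=
  sub_le_sub_right (Finset.sum_le_sum fun α _ ↦ mul_le_mul_of_nonneg_left
    (hψχ _ (mul_nonneg (inv_nonneg.2 (hw α)) (abs_nonneg _))) (hw α)) _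

theorem regularization_monotone_general {N M : ℕ} {φ φ' : ℝ → ℝ}
    (hprim : ∀ a b : ℝ, 0 < a → a ≤ b → φ b - φ a = ∫ s in a..b, φ' s)
    (hratio : MonotoneOn (fun t ↦ φ' t / t) (Ioi 0)) {δm δp Δm Δp : ℝ} (hΔm : 0 < Δm)
    (hm : Δm ≤ δm) (hδ : δm ≤ δp) (hp : δp ≤ Δp) (hnonneg : 0 ≤ φ' Δm) (hpos : 0 < φ' δp)
    (B : (Fin N → ℝ) →ₗ[ℝ] (Fin M → ℝ)) (f g : Fin N → ℝ)
    {w : Fin M → ℝ} (hw : ∀ α, 0 < w α) :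
    (∀ t : ℝ, 0 ≤ t → phiDelta φ φ' δm δp t ≤ phiDelta φ φ' Δm Δp t) ∧
    (∀ t : ℝ, 0 ≤ t → phiDeltaConj φ φ' Δm Δp t ≤ phiDeltaConj φ φ' δm δp t) ∧
    (∀ v : Fin N → ℝ,
      primalJ w (phiDelta φ φ' δm δp) B f v ≤ primalJ w (phiDelta φ φ' Δm Δp) B f v) ∧
    (∀ τ : Fin M → ℝ,
      dualJ w (phiDeltaConj φ φ' Δm Δp) B g τ ≤ dualJ w (phiDeltaConj φ φ' δm δp) B g τ) := by
  have hprimal : ∀ t : ℝ, 0 ≤ t → phiDelta φ φ' δm δp t ≤ phiDelta φ φ' Δm Δp t :=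
    fun _ ↦ phiDelta_le_phiDelta hprim hratio hΔm hm hδ hp
  have hdual : ∀ r : ℝ, 0 ≤ r → phiDeltaConj φ φ' Δm Δp r ≤ phiDeltaConj φ φ' δm δp r :=
    fun _ ↦ phiDeltaConj_le_phiDeltaConj hprim hratio hΔm hm hδ hp hnonneg hpos
  exact ⟨hprimal, hdual, primalJ_le_primalJ (fun α ↦ (hw α).le) hprimal B f,
    dualJ_le_dualJ (fun α ↦ (hw α).le) hdual B g⟩

theorem IsNFunction.sub_eq_integral {φ φ' : ℝ → ℝ} (hφ : IsNFunction φ φ') {a b : ℝ}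
    (ha : 0 ≤ a) (hb : 0 ≤ b) : φ b - φ a = ∫ s in a..b, φ' s := by
  rw [hφ.eq_integral a ha, hφ.eq_integral b hb]
  exact intervalIntegral.integral_interval_sub_left
    (intervalIntegrable_of_monotoneOn_Ici hφ.deriv_monotoneOn le_rfl hb)
    (intervalIntegrable_of_monotoneOn_Ici hφ.deriv_monotoneOn le_rfl ha)

/-- monotonicity of the regularization in the relaxation interval:
for nested intervals `[δ₋,δ₊] ⊆ [Δ₋,Δ₊] ⊂ (0,∞)` one has `φ_δ ≤ φ_Δ` and
`φ*_δ ≥ φ*_Δ` pointwise, hence `J_δ ≤ J_Δ` and `J*_δ ≥ J*_Δ`. -/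
theorem regularization_monotone {N M : ℕ} (φ φ' : ℝ → ℝ) (hφ : IsNFunction φ φ')
    (hmono : ∀ t T : ℝ, 0 < t → t ≤ T → φ' t / t ≤ φ' T / T)
    (δm δp Δm Δp : ℝ) (hΔm : 0 < Δm) (hΔmδm : Δm ≤ δm) (hδ : δm ≤ δp) (hδpΔp : δp ≤ Δp)
    (B : (Fin N → ℝ) →ₗ[ℝ] (Fin M → ℝ)) (f g : Fin N → ℝ)
    (w : Fin M → ℝ) (hw : ∀ α, 0 < w α) :
    (∀ t : ℝ, 0 ≤ t → phiDelta φ φ' δm δp t ≤ phiDelta φ φ' Δm Δp t) ∧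
    (∀ t : ℝ, 0 ≤ t → phiDeltaConj φ φ' Δm Δp t ≤ phiDeltaConj φ φ' δm δp t) ∧
    (∀ v : Fin N → ℝ,
      primalJ w (phiDelta φ φ' δm δp) B f v ≤ primalJ w (phiDelta φ φ' Δm Δp) B f v) ∧
    (∀ τ : Fin M → ℝ,
      dualJ w (phiDeltaConj φ φ' Δm Δp) B g τ ≤ dualJ w (phiDeltaConj φ φ' δm δp) B g τ) := by
  exact regularization_monotone_general
    (fun _ _ ha hab ↦ hφ.sub_eq_integral ha.le (ha.le.trans hab))
    (fun t ht T _ htT ↦ hmono t T ht htT) hΔm hΔmδm hδ hδpΔp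
    (hφ.deriv_nonneg Δm hΔm.le) (hφ.deriv_pos δp (hΔm.trans_le (hΔmδm.trans hδ))) B f g hw
end
end

section
/- Let φ be an N-function such that t ↦ φ'(t)/t is non-decreasing on (0,∞), let δ = [δ₋, δ₊] ⊂ (0,∞) with 0 < δ₋ ≤ δ₊ < ∞, let φ_δ be the shifted regularization, φ*_δ its dual integrand, and let the dual regularization error be e*_δ(t) := φ*_δ(t) − φ*(t), where φ* is the Fenchel conjugate of φ. Then for all t ≥ 0 one has 0 ≤ e*_δ(t), and moreover e*_δ(t) ≤ φ*(φ'(δ₋)) − (1/2)δ₋φ'(δ₋) for t ∈ [0, φ'(δ₋)), e*_δ(t) = 0 for t ∈ [φ'(δ₋), φ'(δ₊)], and e*_δ(t) ≤ (t² − φ'(δ₊)²)·δ₊/(2φ'(δ₊)) for t ∈ (φ'(δ₊), ∞). -/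
open Filter MeasureTheory Set Topology

noncomputable section

/-- Shifted dual integrand `φ*_δ` in its explicit piecewise form. -/
def phiDeltaConjE (φ φ' : ℝ → ℝ) (δm δp r : ℝ) : ℝ :=
  if r < φ' δm then δm / (2 * φ' δm) * r ^ 2 - φ δm + δm / 2 * φ' δm
  else if r ≤ φ' δp then fenchelConj φ r
  else δp / (2 * φ' δp) * r ^ 2 - φ δp + δp / 2 * φ' δp

/-! Monotonicity of `φ'(t)/t` says that `x ↦ φ(√x)` is convex, so for every `d > 0` the parabola
`s ↦ φ'(d)/(2d) s² + φ(d) - (d/2) φ'(d)`, which touches `φ` at `d`, lies below `φ`. Conjugation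
reverses the inequality, and the conjugates of these parabolas at `δ₋` and `δ₊` are the outer
branches of `φ*_δ`: hence `φ* ≤ φ*_δ`. For the upper bounds, `φ(s) ≤ φ'(δ₋)/(2δ₋) s²` on
`[0, δ₋]` bounds `φ*` below on `[0, φ'(δ₋)]` by the quadratic part of `φ*_δ`, and beyond `φ'(δ₊)`
the competitor `s = δ₊` in the supremum defining `φ*` is enough. -/

section FenchelConj

variable {φ : ℝ → ℝ} {a c r : ℝ}

theorem le_fenchelConj (hbdd : BddAbove {x : ℝ | ∃ s : ℝ, 0 ≤ s ∧ x = r * s - φ s})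
    {s : ℝ} (hs : 0 ≤ s) : r * s - φ s ≤ fenchelConj φ r :=
  le_csSup hbdd ⟨s, hs, rfl⟩

theorem mul_sub_le_of_quadratic_le {s y : ℝ} (ha : 0 < a) (h : a / 2 * s ^ 2 + c ≤ y) :
    r * s - y ≤ r ^ 2 / (2 * a) - c := by
  have square : r ^ 2 / (2 * a) - r * s + a / 2 * s ^ 2 = (r - a * s) ^ 2 / (2 * a) := by
    field_simp
    ring
  have : 0 ≤ (r - a * s) ^ 2 / (2 * a) := by positivity
  linarith

theorem bddAbove_mul_sub_of_quadratic_le (ha : 0 < a) (h : ∀ s, 0 ≤ s → a / 2 * s ^ 2 + c ≤ φ s) :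
    BddAbove {x : ℝ | ∃ s : ℝ, 0 ≤ s ∧ x = r * s - φ s} := by
  refine ⟨r ^ 2 / (2 * a) - c, ?_⟩
  rintro _ ⟨s, hs, rfl⟩
  exact mul_sub_le_of_quadratic_le ha (h s hs)

theorem fenchelConj_le_of_quadratic_le (ha : 0 < a)
    (h : ∀ s, 0 ≤ s → a / 2 * s ^ 2 + c ≤ φ s) : fenchelConj φ r ≤ r ^ 2 / (2 * a) - c := by
  refine csSup_le ⟨_, 0, le_rfl, rfl⟩ ?_
  rintro _ ⟨s, hs, rfl⟩
  exact mul_sub_le_of_quadratic_le ha (h s hs)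

theorem le_fenchelConj_of_le_quadratic
    (hbdd : BddAbove {x : ℝ | ∃ s : ℝ, 0 ≤ s ∧ x = r * s - φ s}) (ha : 0 < a) (hr : 0 ≤ r)
    (h : φ (r / a) ≤ a / 2 * (r / a) ^ 2 + c) : r ^ 2 / (2 * a) - c ≤ fenchelConj φ r :=
  calc r ^ 2 / (2 * a) - c = r * (r / a) - (a / 2 * (r / a) ^ 2 + c) := by field_simp; ring
    _ ≤ r * (r / a) - φ (r / a) := by gcongr
    _ ≤ fenchelConj φ r := le_fenchelConj hbdd (by positivity)

end FenchelConj

section MonotoneQuotient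

variable {f : ℝ → ℝ} {d x y : ℝ}

theorem intervalIntegrable_of_monotoneOn_div (hnonneg : ∀ t, 0 < t → 0 ≤ f t)
    (hmono : MonotoneOn (fun t => f t / t) (Ioi 0)) (hx : 0 ≤ x) (hy : 0 ≤ y) :
    IntervalIntegrable f volume x y := by
  -- `f 0 / 0 = 0` extends the monotonicity to `0`.
  have hmono₀ : MonotoneOn (fun t => f t / t) (Ici 0) := by
    intro s (hs : 0 ≤ s) t (ht : 0 ≤ t) hst
    rcases hs.eq_or_lt with rfl | hs
    · rcases ht.eq_or_lt with rfl | ht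
      · exact le_rfl
      · simpa only [div_zero] using div_nonneg (hnonneg t ht) ht.le
    · exact hmono hs (hs.trans_le hst) hst
  have hquot : IntervalIntegrable (fun t => f t / t) volume x y :=
    (hmono₀.mono fun t ht => (le_min hx hy).trans ht.1).intervalIntegrable
  refine (hquot.mul_continuousOn continuousOn_id).congr fun t ht => ?_
  exact div_mul_cancel₀ _ ((le_min hx hy).trans_lt ht.1).ne'

theorem integral_const_mul_id (k x y : ℝ) : ∫ u in x..y, k * u = k * ((y ^ 2 - x ^ 2) / 2) := by
  rw [intervalIntegral.integral_const_mul, integral_id]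

theorem integral_le_of_monotoneOn_div (hf : IntervalIntegrable f volume x y)
    (hmono : MonotoneOn (fun t => f t / t) (Ioi 0)) (hx : 0 ≤ x) (hxy : x ≤ y) (hyd : y ≤ d) :
    ∫ u in x..y, f u ≤ f d / d * ((y ^ 2 - x ^ 2) / 2) := by
  rw [← integral_const_mul_id]
  refine intervalIntegral.integral_mono_on_of_le_Ioo hxy hf
    ((continuous_const_mul _).intervalIntegrable _ _) fun u hu => ?_
  have hu₀ : 0 < u := hx.trans_lt hu.1
  have hud : u ≤ d := hu.2.le.trans hyd
  exact (div_le_iff₀ hu₀).1 (hmono hu₀ (hu₀.trans_le hud) hud)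

theorem le_integral_of_monotoneOn_div (hf : IntervalIntegrable f volume x y)
    (hmono : MonotoneOn (fun t => f t / t) (Ioi 0)) (hd : 0 < d) (hdx : d ≤ x) (hxy : x ≤ y) :
    f d / d * ((y ^ 2 - x ^ 2) / 2) ≤ ∫ u in x..y, f u := by
  rw [← integral_const_mul_id]
  refine intervalIntegral.integral_mono_on hxy
    ((continuous_const_mul _).intervalIntegrable _ _) hf fun u hu => ?_
  have hdu : d ≤ u := hdx.trans hu.1
  have hu₀ : 0 < u := hd.trans_le hdu
  exact (le_div_iff₀ hu₀).1 (hmono hd hu₀ hdu)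

end MonotoneQuotient

section Primitive

variable {φ φ' : ℝ → ℝ} {d r s : ℝ}

theorem tangent_parabola_le (hnonneg : ∀ t, 0 < t → 0 ≤ φ' t)
    (hmono : MonotoneOn (fun t => φ' t / t) (Ioi 0))
    (hφ : ∀ t, 0 ≤ t → φ t = ∫ u in (0 : ℝ)..t, φ' u) (hd : 0 < d) (hs : 0 ≤ s) :
    φ' d / d / 2 * s ^ 2 + (φ d - d / 2 * φ' d) ≤ φ s := by
  have hint {x y : ℝ} (hx : 0 ≤ x) (hy : 0 ≤ y) : IntervalIntegrable φ' volume x y :=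
    intervalIntegrable_of_monotoneOn_div hnonneg hmono hx hy
  have increment {x y : ℝ} (hx : 0 ≤ x) (hy : 0 ≤ y) : φ y - φ x = ∫ u in x..y, φ' u := by
    rw [hφ x hx, hφ y hy]
    exact intervalIntegral.integral_interval_sub_left (hint le_rfl hy) (hint le_rfl hx)
  have coeff : φ' d / d * (d ^ 2 / 2) = d / 2 * φ' d := by field_simp
  rcases le_total d s with hds | hsd
  · have := le_integral_of_monotoneOn_div (hint hd.le hs) hmono hd le_rfl hds
    rw [← increment hd.le hs] at this
    linarith
  · have := integral_le_of_monotoneOn_div (hint hs hd.le) hmono hs hsd le_rfl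
    rw [← increment hs hd.le] at this
    linarith

theorem bddAbove_mul_sub_of_monotoneOn_div (hpos : ∀ t, 0 < t → 0 < φ' t)
    (hmono : MonotoneOn (fun t => φ' t / t) (Ioi 0))
    (hφ : ∀ t, 0 ≤ t → φ t = ∫ u in (0 : ℝ)..t, φ' u) :
    BddAbove {x : ℝ | ∃ s : ℝ, 0 ≤ s ∧ x = r * s - φ s} :=
  bddAbove_mul_sub_of_quadratic_le (div_pos (hpos 1 one_pos) one_pos) fun _ =>
    tangent_parabola_le (fun t ht => (hpos t ht).le) hmono hφ one_pos

theorem fenchelConj_le_conj_tangent_parabola (hpos : ∀ t, 0 < t → 0 < φ' t)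
    (hmono : MonotoneOn (fun t => φ' t / t) (Ioi 0))
    (hφ : ∀ t, 0 ≤ t → φ t = ∫ u in (0 : ℝ)..t, φ' u) (hd : 0 < d) :
    fenchelConj φ r ≤ d / (2 * φ' d) * r ^ 2 - φ d + d / 2 * φ' d := by
  have hd' := hpos d hd
  calc fenchelConj φ r ≤ r ^ 2 / (2 * (φ' d / d)) - (φ d - d / 2 * φ' d) :=
        fenchelConj_le_of_quadratic_le (div_pos hd' hd) fun _ =>
          tangent_parabola_le (fun t ht => (hpos t ht).le) hmono hφ hd
    _ = d / (2 * φ' d) * r ^ 2 - φ d + d / 2 * φ' d := by field_simp; ring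

theorem quadratic_le_fenchelConj (hpos : ∀ t, 0 < t → 0 < φ' t)
    (hmono : MonotoneOn (fun t => φ' t / t) (Ioi 0))
    (hφ : ∀ t, 0 ≤ t → φ t = ∫ u in (0 : ℝ)..t, φ' u) (hd : 0 < d) (hr : 0 ≤ r)
    (hrd : r ≤ φ' d) : d / (2 * φ' d) * r ^ 2 ≤ fenchelConj φ r := by
  have hd' := hpos d hd
  have ha : 0 < φ' d / d := div_pos hd' hd
  have hs : 0 ≤ r / (φ' d / d) := by positivity
  have hsd : r / (φ' d / d) ≤ d := by rwa [div_le_iff₀ ha, mul_div_cancel₀ _ hd.ne']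
  have hparabola : φ (r / (φ' d / d)) ≤ φ' d / d / 2 * (r / (φ' d / d)) ^ 2 + 0 := by
    have hint := intervalIntegrable_of_monotoneOn_div (fun t ht => (hpos t ht).le) hmono le_rfl hs
    rw [hφ _ hs]
    linarith [integral_le_of_monotoneOn_div hint hmono le_rfl hs hsd]
  calc d / (2 * φ' d) * r ^ 2 = r ^ 2 / (2 * (φ' d / d)) - 0 := by field_simp; ring
    _ ≤ fenchelConj φ r :=
      le_fenchelConj_of_le_quadratic (bddAbove_mul_sub_of_monotoneOn_div hpos hmono hφ) ha hr
        hparabola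

theorem strictMonoOn_of_monotoneOn_div (hpos : ∀ t, 0 < t → 0 < φ' t)
    (hmono : MonotoneOn (fun t => φ' t / t) (Ioi 0)) : StrictMonoOn φ' (Ioi 0) := by
  intro x (hx : 0 < x) y (hy : 0 < y) hxy
  calc φ' x = φ' x / x * x := (div_mul_cancel₀ _ hx.ne').symm
    _ < φ' x / x * y := mul_lt_mul_of_pos_left hxy (div_pos (hpos x hx) hx)
    _ ≤ φ' y / y * y := mul_le_mul_of_nonneg_right (hmono hx hy hxy.le) hy.le
    _ = φ' y := div_mul_cancel₀ _ hy.ne'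

end Primitive

section PhiDeltaConjE

variable {φ φ' : ℝ → ℝ} {δm δp r : ℝ}

theorem phiDeltaConjE_of_lt (hr : r < φ' δm) : phiDeltaConjE φ φ' δm δp r =
    δm / (2 * φ' δm) * r ^ 2 - φ δm + δm / 2 * φ' δm :=
  if_pos hr

theorem phiDeltaConjE_of_mem_Icc (hr : r ∈ Icc (φ' δm) (φ' δp)) :
    phiDeltaConjE φ φ' δm δp r = fenchelConj φ r :=
  (if_neg hr.1.not_gt).trans (if_pos hr.2)

theorem phiDeltaConjE_of_gt (hδ : φ' δm ≤ φ' δp) (hr : φ' δp < r) : phiDeltaConjE φ φ' δm δp r =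
    δp / (2 * φ' δp) * r ^ 2 - φ δp + δp / 2 * φ' δp :=
  (if_neg (hδ.trans hr.le).not_gt).trans (if_neg hr.not_ge)

theorem fenchelConj_le_phiDeltaConjE (hpos : ∀ t, 0 < t → 0 < φ' t)
    (hmono : MonotoneOn (fun t => φ' t / t) (Ioi 0))
    (hφ : ∀ t, 0 ≤ t → φ t = ∫ u in (0 : ℝ)..t, φ' u) (hδm : 0 < δm) (hδp : 0 < δp) :
    fenchelConj φ r ≤ phiDeltaConjE φ φ' δm δp r := by
  unfold phiDeltaConjE
  split_ifs
  · exact fenchelConj_le_conj_tangent_parabola hpos hmono hφ hδm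
  · exact le_rfl
  · exact fenchelConj_le_conj_tangent_parabola hpos hmono hφ hδp

theorem phiDeltaConjE_sub_fenchelConj_le_of_lt (hpos : ∀ t, 0 < t → 0 < φ' t)
    (hmono : MonotoneOn (fun t => φ' t / t) (Ioi 0))
    (hφ : ∀ t, 0 ≤ t → φ t = ∫ u in (0 : ℝ)..t, φ' u) (hδm : 0 < δm) (hr₀ : 0 ≤ r)
    (hr : r < φ' δm) : phiDeltaConjE φ φ' δm δp r - fenchelConj φ r ≤
      fenchelConj φ (φ' δm) - δm / 2 * φ' δm := by
  rw [phiDeltaConjE_of_lt hr]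
  have hquad := quadratic_le_fenchelConj hpos hmono hφ hδm hr₀ hr.le
  have hyoung : φ' δm * δm - φ δm ≤ fenchelConj φ (φ' δm) :=
    le_fenchelConj (bddAbove_mul_sub_of_monotoneOn_div hpos hmono hφ) hδm.le
  linarith

theorem phiDeltaConjE_sub_fenchelConj_le_of_gt (hpos : ∀ t, 0 < t → 0 < φ' t)
    (hmono : MonotoneOn (fun t => φ' t / t) (Ioi 0))
    (hφ : ∀ t, 0 ≤ t → φ t = ∫ u in (0 : ℝ)..t, φ' u) (hδp : 0 < δp) (hδ : φ' δm ≤ φ' δp)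
    (hr : φ' δp < r) : phiDeltaConjE φ φ' δm δp r - fenchelConj φ r ≤
      (r ^ 2 - (φ' δp) ^ 2) * δp / (2 * φ' δp) := by
  have hδp' := hpos δp hδp
  have hyoung : r * δp - φ δp ≤ fenchelConj φ r :=
    le_fenchelConj (bddAbove_mul_sub_of_monotoneOn_div hpos hmono hφ) hδp.le
  rw [phiDeltaConjE_of_gt hδ hr]
  calc δp / (2 * φ' δp) * r ^ 2 - φ δp + δp / 2 * φ' δp - fenchelConj φ r
      ≤ δp / (2 * φ' δp) * r ^ 2 + δp / 2 * φ' δp - r * δp := by linarith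
    _ ≤ δp / (2 * φ' δp) * r ^ 2 + δp / 2 * φ' δp - φ' δp * δp := by gcongr
    _ = (r ^ 2 - (φ' δp) ^ 2) * δp / (2 * φ' δp) := by field_simp; ring

end PhiDeltaConjE

theorem dual_regularization_error_general {φ φ' : ℝ → ℝ} (hpos : ∀ t, 0 < t → 0 < φ' t)
    (hmono : MonotoneOn (fun t => φ' t / t) (Ioi 0))
    (hφ : ∀ t, 0 ≤ t → φ t = ∫ u in (0 : ℝ)..t, φ' u)
    {δm δp : ℝ} (hδm : 0 < δm) (hδ : δm ≤ δp) {t : ℝ} (ht : 0 ≤ t) :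
    0 ≤ phiDeltaConjE φ φ' δm δp t - fenchelConj φ t ∧
      (t < φ' δm → phiDeltaConjE φ φ' δm δp t - fenchelConj φ t ≤
        fenchelConj φ (φ' δm) - δm / 2 * φ' δm) ∧
      (φ' δm ≤ t → t ≤ φ' δp → phiDeltaConjE φ φ' δm δp t - fenchelConj φ t = 0) ∧
      (φ' δp < t → phiDeltaConjE φ φ' δm δp t - fenchelConj φ t ≤
        (t ^ 2 - (φ' δp) ^ 2) * δp / (2 * φ' δp)) := by
  have hδp : 0 < δp := hδm.trans_le hδ
  have hδ' : φ' δm ≤ φ' δp := (strictMonoOn_of_monotoneOn_div hpos hmono).monotoneOn hδm hδp hδ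
  exact ⟨sub_nonneg.2 (fenchelConj_le_phiDeltaConjE hpos hmono hφ hδm hδp),
    phiDeltaConjE_sub_fenchelConj_le_of_lt hpos hmono hφ hδm ht,
    fun hm hp => sub_eq_zero.2 (phiDeltaConjE_of_mem_Icc ⟨hm, hp⟩),
    phiDeltaConjE_sub_fenchelConj_le_of_gt hpos hmono hφ hδp hδ'⟩

/-- pointwise dual regularization error bounds for
`e*_δ(t) = φ*_δ(t) − φ*(t)`. -/
theorem dual_regularization_error (φ φ' : ℝ → ℝ) (hφ : IsNFunction φ φ')
    (hmono : ∀ t T : ℝ, 0 < t → t ≤ T → φ' t / t ≤ φ' T / T)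
    (δm δp : ℝ) (hδm : 0 < δm) (hδ : δm ≤ δp) :
    ∀ t : ℝ, 0 ≤ t →
      0 ≤ phiDeltaConjE φ φ' δm δp t - fenchelConj φ t ∧
      (t < φ' δm → phiDeltaConjE φ φ' δm δp t - fenchelConj φ t ≤
        fenchelConj φ (φ' δm) - δm / 2 * φ' δm) ∧
      (φ' δm ≤ t → t ≤ φ' δp → phiDeltaConjE φ φ' δm δp t - fenchelConj φ t = 0) ∧
      (φ' δp < t → phiDeltaConjE φ φ' δm δp t - fenchelConj φ t ≤
        (t ^ 2 - (φ' δp) ^ 2) * δp / (2 * φ' δp)) :=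
  fun _ ht => dual_regularization_error_general hφ.deriv_pos
    (fun t hs T _ hsT => hmono t T hs hsT) hφ.eq_integral hδm hδ ht
end
end
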